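/- arXiv:math/9807157 — 2 statements merged into one kernel-verified Lean document; each statement's English description precedes it below -/
import Mathlib

section
/- Let h be a complex number with exp(h) ≠ 1 and let [x] = (exp(hx/2) − exp(−hx/2))/(exp(h/2) − exp(−h/2)) for x ∈ ℂ. Let k ≥ 1 be an integer and let complex numbers L_{i,2k−2} (i ∈ [1−k, k−2]), L_{i,2k−1} (i ∈ [1−k, k−1]), L_{i,2k} (i ∈ [−k, k−1]) and L_{i,2k+1} (i ∈ [−k, k]) be given such that [L_{i,2k−1} − L_{j,2k−1} + t] ≠ 0 for all i ≠ j in [1−k, k−1] and t ∈ {−1, 0, 1}, and [L_{i,2k} − L_{l,2k} + t] ≠ 0 for all i ≠ l in [−k, k−1] and t ∈ {−1, 0, 1}. Then ∑_{s=0}^{1} ∑_{j=1−k}^{k−1} ∑_{l=−k}^{k−1} (−1)^s · ( ∏_{i≠l, i=−k}^{k−1} [L_{i,2k} − L_{j,2k−1} + s − 1] · ∏_{i=1−k}^{k−2} [L_{i,2k−2} − L_{j,2k−1} + s − 1] ) / ( ∏_{i≠j, i=1−k}^{k−1} [L_{i,2k−1} − L_{j,2k−1} + s][L_{i,2k−1}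 − L_{j,2k−1} + s − 1] ) · ( ∏_{i=−k}^{k} [L_{i,2k+1} − L_{l,2k} + s] · ∏_{i≠j, i=1−k}^{k−1} [L_{i,2k−1} − L_{l,2k} + s] ) / ( ∏_{i≠l, i=−k}^{k−1} [L_{i,2k} − L_{l,2k} + s][L_{i,2k} − L_{l,2k} + s − 1] ) = [ ∑_{j=−k+1}^{k−1} L_{j,2k−1} − ∑_{j=−k+1}^{k−2} L_{j,2k−2} − ∑_{j=−k}^{k} L_{j,2k+1} + ∑_{j=−k}^{k−1} L_{j,2k} − 1 ]. (Identity (23a).) -/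
/-- The q-bracket `[x] = (exp(hx/2) - exp(-hx/2))/(exp(h/2) - exp(-h/2))`. -/
noncomputable def qbr (h x : ℂ) : ℂ :=
  (Complex.exp (h * x / 2) - Complex.exp (-(h * x) / 2)) /
    (Complex.exp (h / 2) - Complex.exp (-h / 2))

/-!
Write `P_F(x) = ∏ i, [F i - x]`. In terms of `exp (-h * x)` such products are polynomials up to
exponential factors, so Lagrange interpolation gives partial fraction expansions and residue
theorems for their quotients. The sum over `s`, `j` and `l` collects double residues of
`G(x, y) = P_C(x) P_A(x) P_D(y) P_B(y) / (P_B(x) P_B(x - 1) P_C(y) P_C(y + 1) [y - x] [x - 1 - y])`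
at the points `(B j + 1, C l)` and `(B j, C l - 1)`. The residue theorem in `y` for `x = B j + 1`
and the residue theorem in `x` for `y = C l - 1` move both families to `(B j + 1, C l - 1)`, where
they cancel. The remaining residues, on the lines `y = x` and `y = x - 1`, are those of a function
of one variable with as many zeros as poles, and they add up to a single bracket. The points are
simple poles only if `B` and `C` do not collide; shifting all `B j` by a small constant achieves
this, and both sides depend continuously on the shift.
-/

open Finset Polynomial Topology

theorem erase_disjSum_inl {ι κ : Type*} [DecidableEq ι] [DecidableEq κ] (s : Finset ι)
    (t : Finset κ) (i : ι) : (s.disjSum t).erase (.inl i) = (s.erase i).disjSum t := by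
  ext (j | k) <;> simp

theorem erase_disjSum_inr {ι κ : Type*} [DecidableEq ι] [DecidableEq κ] (s : Finset ι)
    (t : Finset κ) (k : κ) : (s.disjSum t).erase (.inr k) = s.disjSum (t.erase k) := by
  ext (i | l) <;> simp

section Lagrange

variable {F ι κ : Type*} [Field F] [DecidableEq ι] {s : Finset ι} {u : ι → F} {x : F}

theorem eval_div_prod_sub_eq_sum (hu : Set.InjOn u s) (hx : ∀ i ∈ s, x ≠ u i) {P : F[X]}
    (hP : P.degree < #s) :
    P.eval x / ∏ i ∈ s, (x - u i) =
      ∑ i ∈ s, P.eval (u i) / ((∏ j ∈ s.erase i, (u i - u j)) * (x - u i)) := by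
  have hne : ∏ i ∈ s, (x - u i) ≠ 0 := prod_ne_zero_iff.2 fun i hi => sub_ne_zero.2 (hx i hi)
  rw [div_eq_iff hne, mul_comm]
  conv_lhs => rw [Lagrange.eq_interpolate hu hP, Lagrange.eval_interpolate_not_at_node _ hx,
    Lagrange.eval_nodal]
  congr 1
  refine sum_congr rfl fun i _ => ?_
  rw [Lagrange.nodalWeight, prod_inv_distrib, ← mul_inv, mul_comm, ← div_eq_mul_inv]

theorem prod_sub_div_prod_sub_eq_sum (hu : Set.InjOn u s) (hx : ∀ i ∈ s, x ≠ u i)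
    {t : Finset κ} (w : κ → F) (hcard : #t < #s) :
    (∏ k ∈ t, (x - w k)) / ∏ i ∈ s, (x - u i) =
      ∑ i ∈ s, (∏ k ∈ t, (u i - w k)) / ((∏ j ∈ s.erase i, (u i - u j)) * (x - u i)) := by
  simpa only [Lagrange.eval_nodal] using eval_div_prod_sub_eq_sum hu hx
    (P := Lagrange.nodal t w) (by rwa [Lagrange.degree_nodal, Nat.cast_lt])

theorem prod_sub_div_prod_sub_eq_one_add_sum (hu : Set.InjOn u s) (hx : ∀ i ∈ s, x ≠ u i)
    {t : Finset κ} (w : κ → F) (hcard : #t = #s) :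
    (∏ k ∈ t, (x - w k)) / ∏ i ∈ s, (x - u i) =
      1 + ∑ i ∈ s, (∏ k ∈ t, (u i - w k)) / ((∏ j ∈ s.erase i, (u i - u j)) * (x - u i)) := by
  have hdeg : (Lagrange.nodal t w - Lagrange.nodal s u).degree < #s := by
    rw [← hcard, ← Lagrange.degree_nodal (v := w)]
    exact degree_sub_lt_left (by simp only [Lagrange.degree_nodal, hcard])
      Lagrange.nodal_ne_zero
      (by rw [Lagrange.nodal_monic.leadingCoeff, Lagrange.nodal_monic.leadingCoeff])
  have hne : ∏ i ∈ s, (x - u i) ≠ 0 := prod_ne_zero_iff.2 fun i hi => sub_ne_zero.2 (hx i hi)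
  have hdiff := eval_div_prod_sub_eq_sum hu hx hdeg
  rw [eval_sub, Lagrange.eval_nodal, Lagrange.eval_nodal, sub_div, div_self hne] at hdiff
  rw [← sub_eq_iff_eq_add', hdiff]
  refine sum_congr rfl fun i hi => ?_
  rw [eval_sub, Lagrange.eval_nodal_at_node hi, Lagrange.eval_nodal, sub_zero]

end Lagrange

section Bracket

variable {h : ℂ}

theorem exp_half_sub_exp_neg_half_ne_zero (hh : Complex.exp h ≠ 1) :
    Complex.exp (h / 2) - Complex.exp (-h / 2) ≠ 0 := by
  intro heq
  apply hh
  rw [← add_halves h, Complex.exp_add]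
  nth_rw 1 [sub_eq_zero.1 heq]
  rw [← Complex.exp_add, ← Complex.exp_zero]
  ring_nf

theorem qbr_neg (h x : ℂ) : qbr h (-x) = -qbr h x := by
  unfold qbr
  rw [← neg_div, neg_sub]
  ring_nf

theorem qbr_one (hh : Complex.exp h ≠ 1) : qbr h 1 = 1 := by
  rw [qbr, mul_one, div_self (exp_half_sub_exp_neg_half_ne_zero hh)]

theorem qbr_sub_ne_zero_comm {x y : ℂ} : qbr h (x - y) ≠ 0 ↔ qbr h (y - x) ≠ 0 := by
  rw [← neg_sub, qbr_neg, neg_ne_zero]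

theorem qbr_sub_eq_exp (h w y : ℂ) :
    qbr h (w - y) = Complex.exp (h * w / 2) * Complex.exp (h * y / 2) *
      (Complex.exp (-(h * y)) - Complex.exp (-(h * w))) /
        (Complex.exp (h / 2) - Complex.exp (-h / 2)) := by
  rw [qbr, mul_sub (Complex.exp _ * _)]
  simp only [← Complex.exp_add]
  ring_nf

theorem differentiable_qbr (h : ℂ) : Differentiable ℂ (qbr h) := by
  unfold qbr
  fun_prop

theorem eventually_qbr_add_ne_zero (hh : Complex.exp h ≠ 1) (x : ℂ) :
    ∀ᶠ e in 𝓝[≠] 0, qbr h (x + e) ≠ 0 := by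
  have hf : AnalyticOnNhd ℂ (fun e => qbr h (x + e)) Set.univ :=
    ((differentiable_qbr h).comp (differentiable_id.const_add x)).differentiableOn.analyticOnNhd
      isOpen_univ
  have hmem := hf.preimage_zero_mem_codiscrete (x := 1 - x) (by simp [qbr_one hh])
  filter_upwards [Filter.disjoint_principal_right.1 (mem_codiscrete.1 hmem 0)] with e he
  simpa using he

/-- The product `∏ i ∈ s, [f i - y]`, which plays the role of a polynomial in `y` with roots
`f i`. -/
noncomputable def qbrProd {ι : Type*} (h : ℂ) (s : Finset ι) (f : ι → ℂ) (y : ℂ) : ℂ :=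
  ∏ i ∈ s, qbr h (f i - y)

variable {ι κ : Type*} [DecidableEq ι] {s : Finset ι} {t : Finset κ} {f z : ι → ℂ}
  {w : κ → ℂ} {x y : ℂ}

theorem qbr_mul_qbrProd_erase {i : ι} (hi : i ∈ s) (f : ι → ℂ) (y : ℂ) :
    qbr h (f i - y) * qbrProd h (s.erase i) f y = qbrProd h s f y :=
  mul_prod_erase s (fun i => qbr h (f i - y)) hi

theorem qbrProd_sub_right (h : ℂ) (t : Finset κ) (f : κ → ℂ) (a y : ℂ) :
    qbrProd h t (fun i => f i - a) y = qbrProd h t f (y + a) :=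
  prod_congr rfl fun i _ => by rw [sub_sub, add_comm]

theorem qbrProd_add_right (h : ℂ) (t : Finset κ) (f : κ → ℂ) (a y : ℂ) :
    qbrProd h t (fun i => f i + a) y = qbrProd h t f (y - a) :=
  prod_congr rfl fun i _ => by rw [sub_sub_eq_add_sub]

theorem qbrProd_disjSum (h : ℂ) {ι : Type*} (s : Finset ι) (t : Finset κ) (f : ι ⊕ κ → ℂ)
    (y : ℂ) :
    qbrProd h (s.disjSum t) f y = qbrProd h s (f ∘ .inl) y * qbrProd h t (f ∘ .inr) y :=
  prod_disjSum s t _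

theorem qbrProd_ne_zero (hf : ∀ k ∈ t, qbr h (w k - y) ≠ 0) : qbrProd h t w y ≠ 0 :=
  prod_ne_zero_iff.2 hf

theorem qbrProd_eq_exp_mul_prod_exp_sub (h : ℂ) (t : Finset κ) (w : κ → ℂ) (y : ℂ) :
    qbrProd h t w y =
      Complex.exp (h * (∑ k ∈ t, w k) / 2) *
        (Complex.exp (h * y / 2) / (Complex.exp (h / 2) - Complex.exp (-h / 2))) ^ #t *
        ∏ k ∈ t, (Complex.exp (-(h * y)) - Complex.exp (-(h * w k))) := by
  simp only [qbrProd, qbr_sub_eq_exp, mul_sum, sum_div, Complex.exp_sum, ← prod_const,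
    ← prod_mul_distrib]
  exact prod_congr rfl fun k _ => by ring

theorem qbrProd_div_qbrProd (hh : Complex.exp h ≠ 1) {ι : Type*} (t : Finset κ) (s : Finset ι)
    (w : κ → ℂ) (z : ι → ℂ) (y : ℂ) :
    qbrProd h t w y / qbrProd h s z y =
      Complex.exp (h * (∑ k ∈ t, w k - ∑ i ∈ s, z i) / 2) *
        (Complex.exp (h * y / 2) / (Complex.exp (h / 2) - Complex.exp (-h / 2))) ^ (#t - #s : ℤ) *
        ((∏ k ∈ t, (Complex.exp (-(h * y)) - Complex.exp (-(h * w k)))) /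
          ∏ i ∈ s, (Complex.exp (-(h * y)) - Complex.exp (-(h * z i)))) := by
  have hne := div_ne_zero (Complex.exp_ne_zero (h * y / 2))
    (exp_half_sub_exp_neg_half_ne_zero hh)
  rw [qbrProd_eq_exp_mul_prod_exp_sub, qbrProd_eq_exp_mul_prod_exp_sub, mul_div_mul_comm,
    mul_div_mul_comm, ← Complex.exp_sub, ← sub_div, ← mul_sub, zpow_sub₀ hne, zpow_natCast,
    zpow_natCast]

theorem qbr_sub_ne_zero_iff_exp_ne (hh : Complex.exp h ≠ 1) :
    qbr h (x - y) ≠ 0 ↔ Complex.exp (-(h * x)) ≠ Complex.exp (-(h * y)) := by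
  rw [qbr_sub_ne_zero_comm, qbr_sub_eq_exp]
  simp only [ne_eq, div_eq_zero_iff, mul_eq_zero, Complex.exp_ne_zero,
    exp_half_sub_exp_neg_half_ne_zero hh, sub_eq_zero, or_false, false_or]

theorem injOn_exp_neg_mul (hh : Complex.exp h ≠ 1) {ι : Type*} {s : Finset ι} {z : ι → ℂ}
    (hz : (s : Set ι).Pairwise fun i j => qbr h (z i - z j) ≠ 0) :
    Set.InjOn (fun i => Complex.exp (-(h * z i))) s := fun i hi j hj hij => by
  by_contra hne
  exact (qbr_sub_ne_zero_iff_exp_ne hh).1 (hz hi hj hne) hij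

theorem sum_qbrProd_div_qbrProd_erase (hh : Complex.exp h ≠ 1)
    (hz : (s : Set ι).Pairwise fun i j => qbr h (z i - z j) ≠ 0) (hcard : #t = #s) :
    ∑ i ∈ s, qbrProd h t w (z i) / qbrProd h (s.erase i) z (z i) =
      qbr h (∑ k ∈ t, w k - ∑ i ∈ s, z i) := by
  set d := ∑ k ∈ t, w k - ∑ i ∈ s, z i with hd
  set c := Complex.exp (h / 2) - Complex.exp (-h / 2) with hc
  have hterm : ∀ i ∈ s, qbrProd h t w (z i) / qbrProd h (s.erase i) z (z i) =
      -(Complex.exp (h * d / 2) / c) *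
        ((∏ k ∈ t, (Complex.exp (-(h * z i)) - Complex.exp (-(h * w k)))) /
          ((∏ j ∈ s.erase i, (Complex.exp (-(h * z i)) - Complex.exp (-(h * z j)))) *
            (0 - Complex.exp (-(h * z i))))) := by
    intro i hi
    have hexp : Complex.exp (h * (d + z i) / 2) * Complex.exp (h * z i / 2) =
        Complex.exp (h * d / 2) / Complex.exp (-(h * z i)) := by
      rw [← Complex.exp_add, ← Complex.exp_sub]
      ring_nf
    rw [qbrProd_div_qbrProd hh, hcard, ← card_erase_add_one hi, sum_erase_eq_sub hi,
      ← sub_add, ← hd, ← hc, Nat.cast_add_one, add_sub_cancel_left, zpow_one,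
      ← mul_div_assoc (Complex.exp (h * (d + z i) / 2)), hexp, zero_sub]
    generalize Complex.exp (-(h * z i)) = E
    simp only [div_eq_mul_inv, mul_inv, inv_neg]
    ring
  have hprod : (∏ k ∈ t, (0 - Complex.exp (-(h * w k)))) /
      ∏ i ∈ s, (0 - Complex.exp (-(h * z i))) = Complex.exp (-(h * d)) := by
    simp only [zero_sub, prod_neg, hcard, ← Complex.exp_sum, sum_neg_distrib, ← mul_sum]
    rw [mul_div_mul_left _ _ (by simp), ← Complex.exp_sub, hd]
    ring_nf
  have hlagrange := prod_sub_div_prod_sub_eq_one_add_sum (injOn_exp_neg_mul hh hz)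
    (fun i _ => (Complex.exp_ne_zero _).symm) (fun k => Complex.exp (-(h * w k))) hcard
  rw [sum_congr rfl hterm, ← mul_sum, ← sub_eq_iff_eq_add'.2 hlagrange, hprod, ← sub_zero d,
    qbr_sub_eq_exp]
  simp only [sub_zero, neg_mul, mul_zero, zero_div, Complex.exp_zero, mul_one, neg_zero]
  ring

theorem qbrProd_div_qbrProd_eq_sum (hh : Complex.exp h ≠ 1)
    (hz : (s : Set ι).Pairwise fun i j => qbr h (z i - z j) ≠ 0)
    (hy : ∀ i ∈ s, qbr h (y - z i) ≠ 0) (hcard : #t + 1 = #s) :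
    qbrProd h t w y / qbrProd h s z y =
      -∑ i ∈ s, qbrProd h t w (z i) / (qbrProd h (s.erase i) z (z i) * qbr h (y - z i)) := by
  set d := ∑ k ∈ t, w k - ∑ i ∈ s, z i with hd
  set c := Complex.exp (h / 2) - Complex.exp (-h / 2) with hc
  rw [qbrProd_div_qbrProd hh, ← hcard, Nat.cast_add_one, sub_add_cancel_left, zpow_neg_one, ← hd,
    ← hc, prod_sub_div_prod_sub_eq_sum (injOn_exp_neg_mul hh hz)
      (fun i hi => (qbr_sub_ne_zero_iff_exp_ne hh).1 (hy i hi)) (fun k => Complex.exp (-(h * w k)))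
      (by omega), mul_sum, ← sum_neg_distrib]
  refine sum_congr rfl fun i hi => ?_
  have hexp : Complex.exp (h * (d + z i) / 2) =
        Complex.exp (h * d / 2) * Complex.exp (h * z i / 2) := by
    rw [← Complex.exp_add]
    ring_nf
  rw [← div_div (qbrProd h t w _), qbrProd_div_qbrProd hh, add_left_injective 1 (hcard.trans
    (card_erase_add_one hi).symm), sub_self, zpow_zero, sum_erase_eq_sub hi, ← sub_add, ← hd, hexp,
    qbr_sub_eq_exp, ← hc]
  have := Complex.exp_ne_zero (h * z i / 2)
  have := Complex.exp_ne_zero (h * y / 2)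
  rw [← neg_sub (Complex.exp (-(h * y)))]
  simp only [div_eq_mul_inv, mul_inv, inv_neg, inv_inv]
  field_simp

end Bracket

/-- The nodes `f i` are separated modulo the zeros of the bracket, also after a shift of one of
them by `1` (by `-1` as well, since `i` and `j` may be swapped): distinct indices contribute
distinct zeros of `qbrProd h s f y * qbrProd h s f (y + 1)`. -/
def ShiftSeparated {ι : Type*} (h : ℂ) (s : Finset ι) (f : ι → ℂ) : Prop :=
  (s : Set ι).Pairwise fun i j => qbr h (f i - f j) ≠ 0 ∧ qbr h (f i - f j + 1) ≠ 0

section PartialFractions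

variable {h : ℂ} {ι κ : Type*} [DecidableEq ι] {s : Finset ι} {t : Finset κ} {f : ι → ℂ}
  {g : κ → ℂ} {y : ℂ} {i : ι}

theorem ShiftSeparated.add_right {ι : Type*} {s : Finset ι} {f : ι → ℂ}
    (hf : ShiftSeparated h s f) (a : ℂ) : ShiftSeparated h s fun i => f i + a :=
  fun i hi j hj hij => by simpa only [add_sub_add_right_eq_sub] using hf hi hj hij

theorem ShiftSeparated.qbrProd_erase_sub_one_ne_zero (hf : ShiftSeparated h s f) (hi : i ∈ s) :
    qbrProd h (s.erase i) f (f i - 1) ≠ 0 :=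
  qbrProd_ne_zero fun _ hj => by
    simpa only [sub_sub_eq_add_sub, sub_add_eq_add_sub] using
      (hf (mem_of_mem_erase hj) hi (ne_of_mem_erase hj)).2

theorem ShiftSeparated.qbrProd_erase_add_one_ne_zero (hf : ShiftSeparated h s f) (hi : i ∈ s) :
    qbrProd h (s.erase i) f (f i + 1) ≠ 0 :=
  qbrProd_ne_zero fun _ hj => by
    rw [qbr_sub_ne_zero_comm, ← sub_add_eq_add_sub]
    exact (hf hi (mem_of_mem_erase hj) (ne_of_mem_erase hj).symm).2

theorem ShiftSeparated.pairwise_disjSum (hh : Complex.exp h ≠ 1) {ι : Type*} {s : Finset ι}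
    {f : ι → ℂ} (hf : ShiftSeparated h s f) :
    (s.disjSum s : Set (ι ⊕ ι)).Pairwise fun p q =>
      qbr h (Sum.elim f (fun i => f i - 1) p - Sum.elim f (fun i => f i - 1) q) ≠ 0 := by
  have hcross : ∀ i ∈ s, ∀ j ∈ s, qbr h (f i - (f j - 1)) ≠ 0 := by
    intro i hi j hj
    rw [← sub_add]
    obtain rfl | hij := eq_or_ne i j
    · rw [sub_self, zero_add, qbr_one hh]
      exact one_ne_zero
    · exact (hf hi hj hij).2
  rintro (i | i) hi (j | j) hj hij <;>
    simp only [mem_coe, inl_mem_disjSum, inr_mem_disjSum] at hi hj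
  · exact (hf hi hj (ne_of_apply_ne _ hij)).1
  · exact hcross i hi j hj
  · exact qbr_sub_ne_zero_comm.1 (hcross j hj i hi)
  · simpa only [Sum.elim_inr, sub_sub_sub_cancel_right] using
      (hf hi hj (ne_of_apply_ne _ hij)).1

theorem ShiftSeparated.qbrProd_div_eq_sum_sub_sum (hh : Complex.exp h ≠ 1)
    (hf : ShiftSeparated h s f) (hy : ∀ i ∈ s, qbr h (y - f i) ≠ 0)
    (hy' : ∀ i ∈ s, qbr h (y - f i + 1) ≠ 0) (hcard : #t + 1 = 2 * #s) :
    qbrProd h t g y / (qbrProd h s f y * qbrProd h s f (y + 1)) =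
      ∑ i ∈ s, qbrProd h t g (f i) / (qbrProd h (s.erase i) f (f i) *
          qbrProd h (s.erase i) f (f i + 1) * qbr h (y - f i)) -
        ∑ i ∈ s, qbrProd h t g (f i - 1) / (qbrProd h (s.erase i) f (f i - 1) *
          qbrProd h (s.erase i) f (f i) * qbr h (y - f i + 1)) := by
  have hpartial := qbrProd_div_qbrProd_eq_sum hh (w := g) (t := t) (y := y)
    (hf.pairwise_disjSum hh) (by
      rintro (i | i) hi <;> simp only [inl_mem_disjSum, inr_mem_disjSum] at hi
      · exact hy i hi
      · simpa only [Sum.elim_inr, ← sub_add] using hy' i hi)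
    (by rw [card_disjSum, hcard, two_mul])
  rw [qbrProd_disjSum, Sum.elim_comp_inl, Sum.elim_comp_inr, qbrProd_sub_right] at hpartial
  rw [hpartial, sum_disjSum, neg_add, ← sub_eq_add_neg, ← sum_neg_distrib]
  congr 1 <;> refine sum_congr rfl fun i hi => ?_
  · rw [erase_disjSum_inl, qbrProd_disjSum, Sum.elim_comp_inl, Sum.elim_comp_inr, Sum.elim_inl,
      qbrProd_sub_right, ← qbr_mul_qbrProd_erase hi f (f i + 1), sub_add_cancel_left, qbr_neg,
      qbr_one hh, neg_one_mul, mul_neg, neg_mul, div_neg, neg_neg]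
  · rw [erase_disjSum_inr, qbrProd_disjSum, Sum.elim_comp_inl, Sum.elim_comp_inr, Sum.elim_inr,
      qbrProd_sub_right, sub_add_cancel, ← qbr_mul_qbrProd_erase hi f (f i - 1), sub_sub_cancel,
      qbr_one hh, one_mul, ← sub_add]

theorem ShiftSeparated.sum_qbrProd_erase_div (hh : Complex.exp h ≠ 1)
    (hf : ShiftSeparated h s f) (hy : ∀ i ∈ s, qbr h (y - f i) ≠ 0)
    (hy' : ∀ i ∈ s, qbr h (y - f i + 1) ≠ 0) (hcard : #t + 1 = 2 * #s) :
    ∑ i ∈ s, qbrProd h t g (f i) * qbrProd h (s.erase i) f y /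
        (qbrProd h (s.erase i) f (f i) * qbrProd h (s.erase i) f (f i + 1)) =
      ∑ i ∈ s, qbrProd h t g (f i - 1) * qbrProd h (s.erase i) f y /
          (qbrProd h (s.erase i) f (f i - 1) * qbrProd h (s.erase i) f (f i)) *
          (qbr h (y - f i) / qbr h (y - f i + 1)) -
        qbrProd h t g y / qbrProd h s f (y + 1) := by
  have hne : qbrProd h s f y ≠ 0 :=
    qbrProd_ne_zero fun i hi => qbr_sub_ne_zero_comm.1 (hy i hi)
  have hpartial := congr_arg (qbrProd h s f y * ·)
    (hf.qbrProd_div_eq_sum_sub_sum hh (g := g) hy hy' hcard)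
  simp only [mul_div_assoc', mul_div_mul_left _ _ hne, mul_sub, mul_sum] at hpartial
  rw [hpartial, ← sub_add, ← sub_eq_iff_eq_add, ← sum_sub_distrib, ← sum_sub_distrib]
  refine sum_congr rfl fun i hi => ?_
  have := hy i hi
  rw [← qbr_mul_qbrProd_erase hi f y, ← neg_sub y, qbr_neg]
  field_simp
  ring

theorem ShiftSeparated.sum_qbrProd_erase_add_one_div (hh : Complex.exp h ≠ 1)
    (hf : ShiftSeparated h s f) (hy : ∀ i ∈ s, qbr h (y - f i) ≠ 0)
    (hy' : ∀ i ∈ s, qbr h (y - f i + 1) ≠ 0) (hcard : #t + 1 = 2 * #s) :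
    ∑ i ∈ s, qbrProd h t g (f i - 1) * qbrProd h (s.erase i) f (y + 1) /
        (qbrProd h (s.erase i) f (f i - 1) * qbrProd h (s.erase i) f (f i)) =
      ∑ i ∈ s, qbrProd h t g (f i) * qbrProd h (s.erase i) f (y + 1) /
          (qbrProd h (s.erase i) f (f i) * qbrProd h (s.erase i) f (f i + 1)) *
          (qbr h (y - f i + 1) / qbr h (y - f i)) +
        qbrProd h t g y / qbrProd h s f y := by
  have hne : qbrProd h s f (y + 1) ≠ 0 := qbrProd_ne_zero fun i hi => by
    rw [qbr_sub_ne_zero_comm, ← sub_add_eq_add_sub]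
    exact hy' i hi
  have hpartial := congr_arg (· * qbrProd h s f (y + 1))
    (hf.qbrProd_div_eq_sum_sub_sum hh (g := g) hy hy' hcard)
  simp only [div_mul_eq_mul_div, mul_div_mul_right _ _ hne, sub_mul, sum_mul] at hpartial
  rw [hpartial, ← sub_eq_iff_eq_add', ← sum_sub_distrib, ← sum_sub_distrib]
  refine sum_congr rfl fun i hi => ?_
  have := hy' i hi
  rw [← qbr_mul_qbrProd_erase hi f (y + 1), ← neg_sub (y + 1), qbr_neg, ← sub_add_eq_add_sub]
  field_simp
  ring

end PartialFractions

/-- With `P_F = qbrProd h _ F`, the double residue at `x ∈ {B j, B j + 1}`, `y ∈ {C l, C l - 1}` of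
`P_C(x) P_A(x) P_D(y) P_B(y) / (P_B(x) P_B(x - 1) P_C(y) P_C(y + 1) [y - x] [x - 1 - y])`,
up to a constant and without the factor `[C l - x] [B j - y] / ([y - x] [x - 1 - y])`, which is `1`
at `(B j + 1, C l)` and at `(B j, C l - 1)`. -/
noncomputable def doubleResidue {α β γ δ : Type*} [DecidableEq β] [DecidableEq γ] (h : ℂ)
    (a : Finset α) (b : Finset β) (c : Finset γ) (d : Finset δ)
    (A : α → ℂ) (B : β → ℂ) (C : γ → ℂ) (D : δ → ℂ) (j : β) (l : γ) (x y : ℂ) : ℂ :=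
  qbrProd h (c.erase l) C x * qbrProd h a A x /
      (qbrProd h (b.erase j) B (x - 1) * qbrProd h (b.erase j) B x) *
    (qbrProd h d D y * qbrProd h (b.erase j) B y /
      (qbrProd h (c.erase l) C y * qbrProd h (c.erase l) C (y + 1)))

section DoubleResidue

variable {h : ℂ} {α β γ δ : Type*} [DecidableEq β] [DecidableEq γ]
  {a : Finset α} {b : Finset β} {c : Finset γ} {d : Finset δ}
  {A : α → ℂ} {B : β → ℂ} {C : γ → ℂ} {D : δ → ℂ} {j : β} {l : γ} {x y : ℂ}

theorem sum_doubleResidue_right (hh : Complex.exp h ≠ 1) (hC : ShiftSeparated h c C)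
    (hbd : #b + #d = 2 * #c) (hj : j ∈ b) (hB : qbrProd h (b.erase j) B x ≠ 0)
    (hx : ∀ l ∈ c, qbr h (x - C l) ≠ 0) (hx' : ∀ l ∈ c, qbr h (x - C l + 1) ≠ 0) :
    ∑ l ∈ c, doubleResidue h a b c d A B C D j l x (C l) =
      ∑ l ∈ c, doubleResidue h a b c d A B C D j l x (C l - 1) *
          (qbr h (x - C l) / qbr h (x - C l + 1)) -
        qbrProd h a A x * qbrProd h d D x /
          (qbrProd h (b.erase j) B (x - 1) * qbrProd h c C (x + 1)) := by
  have hpartial := congr_arg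
    (qbrProd h a A x / (qbrProd h (b.erase j) B (x - 1) * qbrProd h (b.erase j) B x) * ·)
    (hC.sum_qbrProd_erase_div hh (g := Sum.elim D B) (t := d.disjSum (b.erase j)) hx hx'
      (by have := card_erase_add_one hj; rw [card_disjSum]; omega))
  simp only [qbrProd_disjSum, Sum.elim_comp_inl, Sum.elim_comp_inr, mul_sub, mul_sum] at hpartial
  convert hpartial using 2
  · rw [doubleResidue]
    ring
  · exact sum_congr rfl fun l _ => by rw [doubleResidue, sub_add_cancel]; ring
  · field_simp

theorem sum_doubleResidue_left (hh : Complex.exp h ≠ 1) (hB : ShiftSeparated h b B)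
    (hac : #a + #c = 2 * #b) (hl : l ∈ c) (hC : qbrProd h (c.erase l) C y ≠ 0)
    (hy : ∀ j ∈ b, qbr h (y - B j - 1) ≠ 0) (hy' : ∀ j ∈ b, qbr h (y - B j) ≠ 0) :
    ∑ j ∈ b, doubleResidue h a b c d A B C D j l (B j) y =
      ∑ j ∈ b, doubleResidue h a b c d A B C D j l (B j + 1) y *
          (qbr h (y - B j) / qbr h (y - B j - 1)) +
        qbrProd h a A y * qbrProd h d D y /
          (qbrProd h b B (y - 1) * qbrProd h (c.erase l) C (y + 1)) := by
  have hpartial := congr_arg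
    (· * (qbrProd h d D y / (qbrProd h (c.erase l) C y * qbrProd h (c.erase l) C (y + 1))))
    ((hB.add_right 1).sum_qbrProd_erase_add_one_div hh (y := y) (g := Sum.elim A C)
      (t := a.disjSum (c.erase l)) (by simpa only [← sub_sub] using hy)
      (by simpa only [← sub_sub, sub_add_cancel] using hy')
      (by have := card_erase_add_one hl; rw [card_disjSum]; omega))
  simp only [qbrProd_disjSum, Sum.elim_comp_inl, Sum.elim_comp_inr, qbrProd_add_right,
    add_sub_cancel_right, ← sub_sub, sub_add_cancel, add_mul, sum_mul] at hpartial
  convert hpartial using 2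
  · rw [doubleResidue]
    ring
  · exact sum_congr rfl fun j _ => by rw [doubleResidue, add_sub_cancel_right]; ring
  · field_simp

theorem sum_doubleResidue_right_add_one (hh : Complex.exp h ≠ 1)
    (hB : ShiftSeparated h b B) (hC : ShiftSeparated h c C) (hbd : #b + #d = 2 * #c) (hj : j ∈ b)
    (hBC : ∀ l ∈ c, qbr h (B j - C l + 1) ≠ 0) (hBC' : ∀ l ∈ c, qbr h (B j - C l + 2) ≠ 0) :
    ∑ l ∈ c, doubleResidue h a b c d A B C D j l (B j + 1) (C l) =
      ∑ l ∈ c, doubleResidue h a b c d A B C D j l (B j + 1) (C l - 1) *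
          (qbr h (B j - C l + 1) / qbr h (B j - C l + 2)) -
        qbrProd h a A (B j + 1) * qbrProd h d D (B j + 1) /
          (qbrProd h (b.erase j) B (B j) * qbrProd h c C (B j + 2)) := by
  have hpos : ∀ l, B j + 1 - C l = B j - C l + 1 := fun l => add_sub_right_comm _ _ _
  have hpartial := sum_doubleResidue_right (a := a) (A := A) (D := D) (x := B j + 1) hh hC hbd hj
    (hB.qbrProd_erase_add_one_ne_zero hj) (fun l hl => by rw [hpos]; exact hBC l hl)
    (fun l hl => by rw [hpos, add_assoc, one_add_one_eq_two]; exact hBC' l hl)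
  simpa only [hpos, add_sub_cancel_right, add_assoc, one_add_one_eq_two] using hpartial

theorem sum_doubleResidue_left_sub_one (hh : Complex.exp h ≠ 1)
    (hB : ShiftSeparated h b B) (hC : ShiftSeparated h c C) (hac : #a + #c = 2 * #b) (hl : l ∈ c)
    (hBC : ∀ j ∈ b, qbr h (B j - C l + 1) ≠ 0) (hBC' : ∀ j ∈ b, qbr h (B j - C l + 2) ≠ 0) :
    ∑ j ∈ b, doubleResidue h a b c d A B C D j l (B j) (C l - 1) =
      ∑ j ∈ b, doubleResidue h a b c d A B C D j l (B j + 1) (C l - 1) *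
          (qbr h (B j - C l + 1) / qbr h (B j - C l + 2)) +
        qbrProd h a A (C l - 1) * qbrProd h d D (C l - 1) /
          (qbrProd h b B (C l - 2) * qbrProd h (c.erase l) C (C l)) := by
  have hneg : ∀ j, C l - 1 - B j = -(B j - C l + 1) := fun j => by ring
  have hneg' : ∀ j, -(B j - C l + 1) - 1 = -(B j - C l + 2) := fun j => by ring
  have hpartial := sum_doubleResidue_left (A := A) (D := D) (d := d) hh hB hac hl
    (hC.qbrProd_erase_sub_one_ne_zero hl)
    (fun j hj => by rw [hneg, hneg', qbr_neg]; exact neg_ne_zero.2 (hBC' j hj))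
    (fun j hj => by rw [hneg, qbr_neg]; exact neg_ne_zero.2 (hBC j hj))
  simpa only [hneg, hneg', qbr_neg, neg_div_neg_eq, sub_sub (C l), one_add_one_eq_two,
    sub_add_cancel] using hpartial

theorem sum_boundary_residues_eq_qbr (hh : Complex.exp h ≠ 1) (hB : ShiftSeparated h b B)
    (hC : ShiftSeparated h c C) (hBC : ∀ j ∈ b, ∀ l ∈ c, qbr h (B j - C l + 2) ≠ 0)
    (hcard : #a + #d = #b + #c) :
    ∑ j ∈ b, qbrProd h a A (B j + 1) * qbrProd h d D (B j + 1) /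
          (qbrProd h (b.erase j) B (B j) * qbrProd h c C (B j + 2)) +
        ∑ l ∈ c, qbrProd h a A (C l - 1) * qbrProd h d D (C l - 1) /
          (qbrProd h b B (C l - 2) * qbrProd h (c.erase l) C (C l)) =
      qbr h (∑ i ∈ a, A i + ∑ i ∈ d, D i - (∑ j ∈ b, B j + #b + (∑ l ∈ c, C l - #c))) := by
  have hnode : ∀ j ∈ b, ∀ l ∈ c, qbr h (B j + 1 - (C l - 1)) ≠ 0 := fun j hj l hl => by
    convert hBC j hj l hl using 2
    ring
  have hsep : (b.disjSum c : Set (β ⊕ γ)).Pairwise fun p q =>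
      qbr h (Sum.elim (fun j => B j + 1) (fun l => C l - 1) p -
        Sum.elim (fun j => B j + 1) (fun l => C l - 1) q) ≠ 0 := by
    rintro (j | l) hp (j' | l') hq hpq <;>
      simp only [mem_coe, inl_mem_disjSum, inr_mem_disjSum] at hp hq
    · simpa only [Sum.elim_inl, add_sub_add_right_eq_sub] using
        (hB hp hq (ne_of_apply_ne _ hpq)).1
    · exact hnode j hp l' hq
    · exact qbr_sub_ne_zero_comm.1 (hnode j' hq l hp)
    · simpa only [Sum.elim_inr, sub_sub_sub_cancel_right] using
        (hC hp hq (ne_of_apply_ne _ hpq)).1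
  have hresidues := sum_qbrProd_div_qbrProd_erase hh (t := a.disjSum d) (w := Sum.elim A D) hsep
    (by rw [card_disjSum, card_disjSum, hcard])
  simp only [sum_disjSum, qbrProd_disjSum, erase_disjSum_inl, erase_disjSum_inr,
    Sum.elim_comp_inl, Sum.elim_comp_inr, Sum.elim_inl, Sum.elim_inr, qbrProd_add_right,
    qbrProd_sub_right, add_sub_cancel_right, sub_add_cancel, add_assoc, sub_sub,
    one_add_one_eq_two, sum_add_distrib, sum_sub_distrib, sum_const, nsmul_one] at hresidues
  simpa only [add_assoc] using hresidues

theorem sum_doubleResidue_sub_sum_of_generic (hh : Complex.exp h ≠ 1)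
    (hB : ShiftSeparated h b B) (hC : ShiftSeparated h c C) (hac : #a + #c = 2 * #b)
    (hbd : #b + #d = 2 * #c) (hBC : ∀ j ∈ b, ∀ l ∈ c, qbr h (B j - C l + 1) ≠ 0)
    (hBC' : ∀ j ∈ b, ∀ l ∈ c, qbr h (B j - C l + 2) ≠ 0) :
    ∑ j ∈ b, ∑ l ∈ c, doubleResidue h a b c d A B C D j l (B j + 1) (C l) -
        ∑ j ∈ b, ∑ l ∈ c, doubleResidue h a b c d A B C D j l (B j) (C l - 1) =
      qbr h (∑ j ∈ b, B j - ∑ i ∈ a, A i - ∑ i ∈ d, D i + ∑ l ∈ c, C l - (#c - #b)) := by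
  have hbdry := sum_boundary_residues_eq_qbr (A := A) (D := D) hh hB hC hBC'
    (show #a + #d = #b + #c by omega)
  have hneg : ∑ j ∈ b, B j - ∑ i ∈ a, A i - ∑ i ∈ d, D i + ∑ l ∈ c, C l - (#c - #b : ℂ) =
      -(∑ i ∈ a, A i + ∑ i ∈ d, D i - (∑ j ∈ b, B j + #b + (∑ l ∈ c, C l - #c))) := by ring
  rw [sum_congr rfl fun j hj =>
    sum_doubleResidue_right_add_one hh hB hC hbd hj (hBC j hj) (hBC' j hj),
    sum_comm.trans (sum_congr rfl fun l hl => sum_doubleResidue_left_sub_one hh hB hC hac hl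
      (fun j hj => hBC j hj l hl) fun j hj => hBC' j hj l hl), sum_sub_distrib, sum_add_distrib,
    sum_comm (s := c), hneg, qbr_neg, ← hbdry]
  ring

@[fun_prop]
theorem continuous_qbrProd (h : ℂ) {ι : Type*} (s : Finset ι) (f : ι → ℂ) :
    Continuous (qbrProd h s f) :=
  continuous_finsetProd s fun _ _ =>
    (differentiable_qbr h).continuous.comp (continuous_const.sub continuous_id)

theorem continuous_doubleResidue_sub (h : ℂ) (a : Finset α) (b : Finset β) (c : Finset γ)
    (d : Finset δ) (A : α → ℂ) (B : β → ℂ) (C : γ → ℂ) (D : δ → ℂ) (j : β) (l : γ) (x y : ℂ) :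
    Continuous fun e => doubleResidue h a b c d A (fun i => B i - e) C D j l (x - e) y := by
  simp only [doubleResidue, qbrProd_sub_right, sub_right_comm x _ 1, sub_add_cancel]
  simp only [div_eq_mul_inv]
  fun_prop

theorem sum_doubleResidue_sub_sum (hh : Complex.exp h ≠ 1) (hB : ShiftSeparated h b B)
    (hC : ShiftSeparated h c C) (hac : #a + #c = 2 * #b) (hbd : #b + #d = 2 * #c) :
    ∑ j ∈ b, ∑ l ∈ c, doubleResidue h a b c d A B C D j l (B j + 1) (C l) -
        ∑ j ∈ b, ∑ l ∈ c, doubleResidue h a b c d A B C D j l (B j) (C l - 1) =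
      qbr h (∑ j ∈ b, B j - ∑ i ∈ a, A i - ∑ i ∈ d, D i + ∑ l ∈ c, C l - (#c - #b)) := by
  have hgeneric : ∀ u : ℂ, ∀ᶠ e in 𝓝[≠] 0, ∀ j ∈ b, ∀ l ∈ c, qbr h (B j - e - C l + u) ≠ 0 :=
    fun u => (Filter.eventually_all_finset b).2 fun j _ =>
      (Filter.eventually_all_finset c).2 fun l _ =>
        (eventually_qbr_add_ne_zero hh (C l - B j - u)).mono fun e he => by
          convert neg_ne_zero.2 he using 1
          rw [← qbr_neg]
          ring_nf
  have hlim : ∀ᶠ e in 𝓝[≠] 0,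
      ∑ j ∈ b, ∑ l ∈ c,
          doubleResidue h a b c d A (fun i => B i - e) C D j l (B j + 1 - e) (C l) -
        ∑ j ∈ b, ∑ l ∈ c,
          doubleResidue h a b c d A (fun i => B i - e) C D j l (B j - e) (C l - 1) =
      qbr h (∑ j ∈ b, (B j - e) - ∑ i ∈ a, A i - ∑ i ∈ d, D i + ∑ l ∈ c, C l - (#c - #b)) := by
    filter_upwards [hgeneric 1, hgeneric 2] with e he he'
    simpa only [← sub_eq_add_neg, sub_add_eq_add_sub] using
      sum_doubleResidue_sub_sum_of_generic hh (hB.add_right (-e)) hC hac hbd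
        (by simpa only [← sub_eq_add_neg] using he) (by simpa only [← sub_eq_add_neg] using he')
  have hcont := continuous_doubleResidue_sub h a b c d A B C D
  have hqbr := (differentiable_qbr h).continuous
  simpa only [sub_zero] using ((ContinuousAt.eventuallyEq_nhds_iff_eventuallyEq_nhdsNE
    (by fun_prop) (by fun_prop)).1 hlim).eq_of_nhds

end DoubleResidue

theorem identity_23a_general {α β γ δ : Type*} [DecidableEq β] [DecidableEq γ] {h : ℂ}
    (hh : Complex.exp h ≠ 1) {a : Finset α} {b : Finset β} {c : Finset γ} {d : Finset δ}
    (A : α → ℂ) {B : β → ℂ} {C : γ → ℂ} (D : δ → ℂ) (hB : ShiftSeparated h b B)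
    (hC : ShiftSeparated h c C) (hac : #a + #c = 2 * #b) (hbd : #b + #d = 2 * #c) :
    ∑ s ∈ range 2, ∑ j ∈ b, ∑ l ∈ c, (-1 : ℂ) ^ s *
        (((∏ i ∈ c.erase l, qbr h (C i - B j + s - 1)) * ∏ i ∈ a, qbr h (A i - B j + s - 1)) /
          ∏ i ∈ b.erase j, qbr h (B i - B j + s) * qbr h (B i - B j + s - 1)) *
        (((∏ i ∈ d, qbr h (D i - C l + s)) * ∏ i ∈ b.erase j, qbr h (B i - C l + s)) /
          ∏ i ∈ c.erase l, qbr h (C i - C l + s) * qbr h (C i - C l + s - 1)) =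
      qbr h (∑ j ∈ b, B j - ∑ i ∈ a, A i - ∑ i ∈ d, D i + ∑ l ∈ c, C l - (#c - #b)) := by
  have hterm : ∀ (s : ℕ) (j : β) (l : γ),
      (((∏ i ∈ c.erase l, qbr h (C i - B j + s - 1)) * ∏ i ∈ a, qbr h (A i - B j + s - 1)) /
          ∏ i ∈ b.erase j, qbr h (B i - B j + s) * qbr h (B i - B j + s - 1)) *
        (((∏ i ∈ d, qbr h (D i - C l + s)) * ∏ i ∈ b.erase j, qbr h (B i - C l + s)) /
          ∏ i ∈ c.erase l, qbr h (C i - C l + s) * qbr h (C i - C l + s - 1)) =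
      doubleResidue h a b c d A B C D j l (B j + 1 - s) (C l - s) := fun s j l => by
    have hshift : ∀ u v : ℂ, u - (v - s) = u - v + s := fun u v => by ring
    have hshift' : ∀ u v : ℂ, u - (v - s + 1) = u - v + s - 1 := fun u v => by ring
    simp only [doubleResidue, qbrProd, prod_mul_distrib, add_sub_right_comm (B j),
      add_sub_cancel_right, hshift, hshift']
  simp only [mul_assoc ((-1 : ℂ) ^ _), hterm, ← mul_sum, sum_range_succ, sum_range_zero]
  rw [← sum_doubleResidue_sub_sum hh hB hC hac hbd]
  simp [sub_eq_add_neg]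

/-- Identity (23a).  `A i` stands for `L_{i,2k-2}`, `B i` for `L_{i,2k-1}`,
`C i` for `L_{i,2k}` and `D i` for `L_{i,2k+1}`. -/
theorem identity_23a (h : ℂ) (hh : Complex.exp h ≠ 1) (k : ℤ) (hk : 1 ≤ k)
    (A B C D : ℤ → ℂ)
    (hB : ∀ i ∈ Finset.Icc (1 - k) (k - 1), ∀ j ∈ Finset.Icc (1 - k) (k - 1), i ≠ j →
      ∀ t ∈ ({-1, 0, 1} : Finset ℤ), qbr h (B i - B j + (t : ℂ)) ≠ 0)
    (hC : ∀ i ∈ Finset.Icc (-k) (k - 1), ∀ l ∈ Finset.Icc (-k) (k - 1), i ≠ l →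
      ∀ t ∈ ({-1, 0, 1} : Finset ℤ), qbr h (C i - C l + (t : ℂ)) ≠ 0) :
    ∑ s ∈ Finset.range 2, ∑ j ∈ Finset.Icc (1 - k) (k - 1), ∑ l ∈ Finset.Icc (-k) (k - 1),
      (-1 : ℂ) ^ s *
      (((∏ i ∈ (Finset.Icc (-k) (k - 1)).erase l, qbr h (C i - B j + (s : ℂ) - 1)) *
          ∏ i ∈ Finset.Icc (1 - k) (k - 2), qbr h (A i - B j + (s : ℂ) - 1)) /
        ∏ i ∈ (Finset.Icc (1 - k) (k - 1)).erase j,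
          qbr h (B i - B j + (s : ℂ)) * qbr h (B i - B j + (s : ℂ) - 1)) *
      (((∏ i ∈ Finset.Icc (-k) k, qbr h (D i - C l + (s : ℂ))) *
          ∏ i ∈ (Finset.Icc (1 - k) (k - 1)).erase j, qbr h (B i - C l + (s : ℂ))) /
        ∏ i ∈ (Finset.Icc (-k) (k - 1)).erase l,
          qbr h (C i - C l + (s : ℂ)) * qbr h (C i - C l + (s : ℂ) - 1))
    = qbr h ((∑ j ∈ Finset.Icc (-k + 1) (k - 1), B j)
        - (∑ j ∈ Finset.Icc (-k + 1) (k - 2), A j)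
        - (∑ j ∈ Finset.Icc (-k) k, D j)
        + (∑ j ∈ Finset.Icc (-k) (k - 1), C j) - 1) := by
  have hB' : ShiftSeparated h (Icc (1 - k) (k - 1)) B := fun i hi j hj hij =>
    ⟨by simpa using hB i hi j hj hij 0, by simpa using hB i hi j hj hij 1⟩
  have hC' : ShiftSeparated h (Icc (-k) (k - 1)) C := fun i hi j hj hij =>
    ⟨by simpa using hC i hi j hj hij 0, by simpa using hC i hi j hj hij 1⟩
  have hcard : #(Icc (-k) (k - 1)) = #(Icc (1 - k) (k - 1)) + 1 := by
    simp only [Int.card_Icc]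
    omega
  rw [identity_23a_general hh A D hB' hC' (by simp only [Int.card_Icc]; omega)
    (by simp only [Int.card_Icc]; omega), hcard, Nat.cast_add_one, add_sub_cancel_left,
    neg_add_eq_sub]
end

section
/- Let q be a nonzero complex number with q² ≠ 1, let n ≥ 2 be an integer, and let A₁, …, A_{n−1}, B₁, …, B_n, C₁, …, C_{n+1}, D₁, …, D_{n−2} be complex numbers with all A_i and all B_i nonzero, such that for all i ≠ j in {1, …, n−1}: A_j ≠ A_i, A_j ≠ q²A_i and A_j ≠ q⁻²A_i, and for all i ≠ l in {1, …, n}: B_l ≠ B_i, B_l ≠ q²B_i and B_l ≠ q⁻²B_i. Then ∑_{j=1}^{n−1} ∑_{l=1}^{n} q · ( ∏_{i≠l, i=1}^{n} (A_j − q⁻²B_i) · ∏_{i=1}^{n−2} (A_j − q⁻²D_i) · ∏_{i=1}^{n+1} (B_l − C_i) · ∏_{i≠j, i=1}^{n−1} (B_l − A_i) ) / ( A_j B_l ∏_{i≠j, i=1}^{n−1} (A_j − A_i)(A_j − q⁻²A_i) · ∏_{i≠l, i=1}^{n} (B_l − B_i)(B_l − q⁻²B_i) ) − ∑_{j=1}^{n−1}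 ∑_{l=1}^{n} q⁻¹ · ( ∏_{i≠l, i=1}^{n} (A_j − B_i) · ∏_{i=1}^{n−2} (A_j − D_i) · ∏_{i=1}^{n+1} (B_l − q²C_i) · ∏_{i≠j, i=1}^{n−1} (B_l − q²A_i) ) / ( A_j B_l ∏_{i≠j, i=1}^{n−1} (A_j − A_i)(A_j − q²A_i) · ∏_{i≠l, i=1}^{n} (B_l − B_i)(B_l − q²B_i) ) − (q − q⁻¹) · ( 1 − q² · ( ∏_{i=1}^{n−2} D_i · ∏_{i=1}^{n+1} C_i ) / ( ∏_{i=1}^{n−1} A_i · ∏_{i=1}^{n} B_i ) ) = 0. (Identity (A21), the rational form of the key identities (23a) and (23b).) -/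
/-!
Put `p = q²` and consider the rational functions `f = Q ∏ (X - p⁻¹ B l) / ∏ (X - A j)(X - p⁻¹ A j)`
and `g = P ∏ (X - A j) / ∏ (X - B l)(X - p⁻¹ B l)`, with `P = ∏ (X - C i)` and
`Q = ∏ (X - p⁻¹ D i)`. Up to the common factor `q⁻¹ (p - 1)²`, both sums of (A21) have the form
`∑ Res f · Res g · K` with the kernel `K(x, y) = ((p x - y)(y - x))⁻¹`: the first, `S₀₀`, runs over
the poles `x = A j`, `y = B l`, the second, `S₁₁`, over `x = p⁻¹ A j`, `y = p⁻¹ B l`. With the mixed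
sum `S₁₀` over `x = p⁻¹ A j`, `y = B l` one has `S₀₀ - S₁₁ = (S₀₀ + S₁₀) - (S₁₀ + S₁₁)`. The first
bracket sums over all poles of `f`, the second over all poles of `g`, and the one-variable residue
theorem evaluates these inner sums as values of `f` and of `g`. What remains is the sum of the
residues of `f g / X = P Q / (X ∏ (X - p⁻¹ A j) ∏ (X - B l))` at its nonzero poles, and the residues
at `∞` and `0` give the right-hand side.

The kernel is singular when poles of `f` and `g` meet. This case is reached by deforming `B` to
`r B` and letting `r → 1` in the field of Laurent series over the given field.
-/

open Filter Finset Polynomial Lagrange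
open scoped LaurentSeries Topology

theorem neBot_nhdsNE_one_laurentSeries (F : Type*) [Field F] : (𝓝[≠] (1 : F⸨X⸩)).NeBot := by
  have hv : Valued.v ((PowerSeries.X : PowerSeries F) : F⸨X⸩) < 1 := by
    rw [← pow_one ((PowerSeries.X : PowerSeries F) : F⸨X⸩), LaurentSeries.valuation_X_pow,
      ← WithZero.exp_zero, WithZero.exp_lt_exp]
    norm_num
  have hlim : Tendsto (fun n : ℕ ↦ 1 + ((PowerSeries.X : PowerSeries F) : F⸨X⸩) ^ n) atTop
      (𝓝[≠] 1) :=
    tendsto_nhdsWithin_iff.2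
      ⟨by simpa using (Valued.tendsto_zero_pow_of_v_lt_one hv).const_add (1 : F⸨X⸩),
        .of_forall fun n ↦ by simp⟩
  exact hlim.neBot

section Residues

variable {F ι κ : Type*} [Field F]

theorem nodal_disjSum (s : Finset ι) (t : Finset κ) (u : ι → F) (v : κ → F) :
    nodal (s.disjSum t) (Sum.elim u v) = nodal s u * nodal t v := by
  simp only [nodal, prod_disjSum, Sum.elim_inl, Sum.elim_inr]

theorem eval_smul_nodal (c : F) (s : Finset ι) (v : ι → F) (x : F) :
    (nodal s (c • v)).eval (c * x) = c ^ #s * (nodal s v).eval x := by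
  simp only [eval_nodal, Pi.smul_apply, smul_eq_mul, ← mul_sub, prod_mul_distrib, prod_const]

theorem eval_inv_mul_nodal {c : F} (hc : c ≠ 0) (s : Finset ι) (v : ι → F) (x : F) :
    (nodal s v).eval (c⁻¹ * x) = c⁻¹ ^ #s * (nodal s (c • v)).eval x := by
  rw [← eval_smul_nodal, inv_smul_smul₀ hc]

theorem eval_zero_nodal (s : Finset ι) (v : ι → F) :
    (nodal s v).eval 0 = (-1) ^ #s * ∏ i ∈ s, v i := by
  simp only [eval_nodal, zero_sub, prod_neg]

theorem eval_zero_nodal_mul_nodal_div {μ ν : Type*} {p : F} (hp : p ≠ 0) {s : Finset ι}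
    {t : Finset κ} {u : Finset μ} {w : Finset ν} (hs : #s = #w + 1) (ht : #t = #w + 2)
    (hu : #u = #w + 3) (A : ι → F) (B : κ → F) (C : μ → F) (D : ν → F) :
    (nodal u C * nodal w (p⁻¹ • D)).eval 0 /
        ((nodal s (p⁻¹ • A)).eval 0 * (nodal t B).eval 0) =
      p * ((∏ i ∈ w, D i) * ∏ i ∈ u, C i) / ((∏ i ∈ s, A i) * ∏ i ∈ t, B i) := by
  simp only [eval_mul, eval_zero_nodal, Pi.smul_apply, smul_eq_mul, prod_mul_distrib, prod_const,
    hs, ht, hu]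
  generalize #w = n
  rw [← mul_div_mul_left (p * _) ((∏ i ∈ s, A i) * _)
    (mul_ne_zero (pow_ne_zero (2 * n + 3) (neg_ne_zero.2 one_ne_zero))
      (pow_ne_zero (n + 1) (inv_ne_zero hp)))]
  congr 1
  · rw [pow_succ p⁻¹]
    linear_combination (-1) ^ (2 * n + 3) * p⁻¹ ^ n *
      ((∏ i ∈ w, D i) * ∏ i ∈ u, C i) * (mul_inv_cancel₀ hp).symm
  · ring

theorem continuous_eval_nodal_smul [TopologicalSpace F] [IsTopologicalRing F] (s : Finset ι)
    (v : ι → F) {x : F → F} (hx : Continuous x) :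
    Continuous fun r ↦ (nodal s (r • v)).eval (x r) := by
  simp only [eval_nodal, Pi.smul_apply, smul_eq_mul]
  fun_prop

theorem eval_nodal_map {K : Type*} [Field K] (φ : F →+* K) (s : Finset ι) (v : ι → F) (x : F) :
    (nodal s (φ ∘ v)).eval (φ x) = φ ((nodal s v).eval x) := by
  simp only [eval_nodal, Function.comp_apply, map_prod, map_sub]

theorem eval_nodal_smul_map {K : Type*} [Field K] (φ : F →+* K) (s : Finset ι) (v : ι → F)
    (c x : F) :
    (nodal s (φ c • (φ ∘ v))).eval (φ x) = φ ((nodal s (c • v)).eval x) := by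
  simp only [eval_nodal, Function.comp_apply, map_prod, map_sub, Pi.smul_apply, smul_eq_mul,
    map_mul]

variable [DecidableEq ι] [DecidableEq κ]

theorem eval_nodal_eq_mul_eval_nodal_erase {s : Finset ι} {i : ι} (hi : i ∈ s) (v : ι → F)
    (x : F) : (nodal s v).eval x = (x - v i) * (nodal (s.erase i) v).eval x := by
  rw [nodal_eq_mul_nodal_erase hi, eval_mul, eval_sub, eval_X, eval_C]

theorem nodalWeight_disjSum_inl (s : Finset ι) (t : Finset κ) (u : ι → F) (v : κ → F) (i : ι) :
    nodalWeight (s.disjSum t) (Sum.elim u v) (.inl i) =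
      nodalWeight s u i / (nodal t v).eval (u i) := by
  have herase : (s.disjSum t).erase (.inl i) = (s.erase i).disjSum t := by
    ext (k | k) <;> simp
  rw [nodalWeight_eq_eval_nodal_erase_inv, herase, nodal_disjSum, Sum.elim_inl, eval_mul, mul_inv,
    nodalWeight_eq_eval_nodal_erase_inv, div_eq_mul_inv]

theorem nodalWeight_disjSum_inr (s : Finset ι) (t : Finset κ) (u : ι → F) (v : κ → F) (k : κ) :
    nodalWeight (s.disjSum t) (Sum.elim u v) (.inr k) =
      nodalWeight t v k / (nodal s u).eval (v k) := by
  have herase : (s.disjSum t).erase (.inr k) = s.disjSum (t.erase k) := by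
    ext (i | i) <;> simp
  rw [nodalWeight_eq_eval_nodal_erase_inv, herase, nodal_disjSum, Sum.elim_inr, eval_mul, mul_inv,
    mul_comm, nodalWeight_eq_eval_nodal_erase_inv, div_eq_mul_inv]

-- The residues of `P / ((X - z) * nodal s v)` on the projective line sum to zero.
theorem sum_nodalWeight_mul_eval_div_sub {s : Finset ι} {v : ι → F} (hv : Set.InjOn v s)
    {P : F[X]} (hP : P.natDegree ≤ #s) {z : F} (hz : ∀ i ∈ s, v i ≠ z) :
    ∑ i ∈ s, nodalWeight s v i * P.eval (v i) / (v i - z) + P.eval z / (nodal s v).eval z =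
      P.coeff #s := by
  have hinj : Set.InjOn (Sum.elim v fun _ : Unit ↦ z) (s.disjSum {()}) := by
    rintro (i | _) hi (k | _) hk h
    · simp_all [hv.eq_iff]
    · simp_all
    · exact absurd h.symm (hz k (by simpa using hk))
    · rfl
  have hdeg : P.degree < #(s.disjSum {()}) := by
    rw [card_disjSum, card_singleton]
    exact degree_le_natDegree.trans_lt (by exact_mod_cast Nat.lt_succ_of_le hP)
  have hcoeff := coeff_eq_sum hinj hdeg
  simp only [div_eq_mul_inv, ← prod_inv_distrib] at hcoeff
  simp only [← nodalWeight.eq_1, sum_disjSum, sum_singleton, nodalWeight_disjSum_inl,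
    nodalWeight_disjSum_inr, card_disjSum, card_singleton, Nat.add_sub_cancel, Sum.elim_inl,
    Sum.elim_inr] at hcoeff
  rw [hcoeff]
  congr 1
  · refine sum_congr rfl fun i _ ↦ ?_
    simp only [eval_nodal, prod_singleton]
    ring
  · simp [nodalWeight, div_eq_mul_inv]

theorem sum_nodalWeight_mul_eval_div_sub_mul_sub {s : Finset ι} {v : ι → F} (hv : Set.InjOn v s)
    {P : F[X]} (hP : P.natDegree ≤ #s) {z z' : F} (hz : ∀ i ∈ s, v i ≠ z)
    (hz' : ∀ i ∈ s, v i ≠ z') (hne : z ≠ z') :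
    ∑ i ∈ s, nodalWeight s v i * P.eval (v i) / ((v i - z) * (v i - z')) =
      (P.eval z' / (nodal s v).eval z' - P.eval z / (nodal s v).eval z) / (z - z') := by
  have hpartial : ∀ i ∈ s, nodalWeight s v i * P.eval (v i) / ((v i - z) * (v i - z')) * (z - z') =
      nodalWeight s v i * P.eval (v i) / (v i - z) -
        nodalWeight s v i * P.eval (v i) / (v i - z') := fun i hi ↦ by
    have := sub_ne_zero.2 (hz i hi)
    have := sub_ne_zero.2 (hz' i hi)
    field_simp
    ring
  rw [eq_div_iff (sub_ne_zero.2 hne), sum_mul, sum_congr rfl hpartial, sum_sub_distrib]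
  linear_combination sum_nodalWeight_mul_eval_div_sub hv hP hz -
    sum_nodalWeight_mul_eval_div_sub hv hP hz'

end Residues

section PairedNodes

variable {F ι : Type*} [Field F]

/-- The node family consisting of `v` and its rescaling `p⁻¹ v`; injectivity of this family says
that no two of the `v i` have ratio `1` or `p`, that `p ≠ 1`, and that no `v i` vanishes. -/
def pairedNodes (p : F) (v : ι → F) : ι ⊕ ι → F := Sum.elim v (p⁻¹ • v)

variable {p : F} {s : Finset ι} {v : ι → F}

theorem pairedNodes_smul (r : F) : pairedNodes p (r • v) = r • pairedNodes p v := by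
  ext (i | i)
  · rfl
  · simp only [pairedNodes, Sum.elim_inr, Pi.smul_apply, smul_comm r p⁻¹]

theorem pairedNodes_map {K : Type*} [Field K] (φ : F →+* K) (v : ι → F) :
    pairedNodes (φ p) (φ ∘ v) = φ ∘ pairedNodes p v := by
  ext (i | i)
  · rfl
  · simp only [pairedNodes, Sum.elim_inr, Pi.smul_apply, Function.comp_apply, smul_eq_mul, map_mul,
      map_inv₀]

theorem injOn_pairedNodes (hp : p ≠ 1) (hv₀ : ∀ i ∈ s, v i ≠ 0)
    (hv : ∀ i ∈ s, ∀ k ∈ s, i ≠ k → v i ≠ v k ∧ v i ≠ p⁻¹ * v k) (hp₀ : p ≠ 0) :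
    Set.InjOn (pairedNodes p v) (s.disjSum s) := by
  have hcross : ∀ i ∈ s, ∀ k ∈ s, v i ≠ p⁻¹ * v k := fun i hi k hk h ↦ by
    rcases eq_or_ne i k with rfl | hik
    · exact hp (inv_eq_one.1 (mul_eq_right₀ (hv₀ i hi) |>.1 h.symm))
    · exact (hv i hi k hk hik).2 h
  have hinj : ∀ i ∈ s, ∀ k ∈ s, v i = v k → i = k := fun i hi k hk h ↦
    by_contra fun hik ↦ (hv i hi k hk hik).1 h
  rintro (i | i) hi (k | k) hk h <;>
    simp only [pairedNodes, mem_coe, inl_mem_disjSum, inr_mem_disjSum, Sum.elim_inl, Sum.elim_inr,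
      Pi.smul_apply, smul_eq_mul] at hi hk h
  · exact congrArg Sum.inl (hinj i hi k hk h)
  · exact absurd h (hcross i hi k hk)
  · exact absurd h.symm (hcross k hk i hi)
  · exact congrArg Sum.inr (hinj i hi k hk (mul_left_cancel₀ (inv_ne_zero hp₀) h))

theorem ne_inv_mul_of_injOn_pairedNodes (hv : Set.InjOn (pairedNodes p v) (s.disjSum s))
    {i k : ι} (hi : i ∈ s) (hk : k ∈ s) : v i ≠ p⁻¹ * v k := fun h ↦
  Sum.inl_ne_inr (hv (by simpa using hi) (by simpa using hk) h)

theorem ne_zero_of_injOn_pairedNodes (hv : Set.InjOn (pairedNodes p v) (s.disjSum s))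
    {i : ι} (hi : i ∈ s) : v i ≠ 0 := fun h ↦
  ne_inv_mul_of_injOn_pairedNodes hv hi hi (by rw [h, mul_zero])

theorem ne_one_of_injOn_pairedNodes (hv : Set.InjOn (pairedNodes p v) (s.disjSum s))
    {i : ι} (hi : i ∈ s) : p ≠ 1 := by
  rintro rfl
  exact ne_inv_mul_of_injOn_pairedNodes hv hi hi (by rw [inv_one, one_mul])

theorem injOn_of_injOn_pairedNodes (hv : Set.InjOn (pairedNodes p v) (s.disjSum s)) :
    Set.InjOn v s := fun i hi k hk h ↦
  Sum.inl_injective (hv (by simpa using hi) (by simpa using hk) h)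

theorem pairedNodes_ne_zero (hp : p ≠ 0) (hv : Set.InjOn (pairedNodes p v) (s.disjSum s))
    {i : ι ⊕ ι} (hi : i ∈ s.disjSum s) : pairedNodes p v i ≠ 0 := by
  rcases i with i | i
  · exact ne_zero_of_injOn_pairedNodes hv (by simpa using hi)
  · exact mul_ne_zero (inv_ne_zero hp) (ne_zero_of_injOn_pairedNodes hv (by simpa using hi))

theorem eval_nodal_erase_mul_nodal_erase_ne_zero [DecidableEq ι]
    (hv : Set.InjOn (pairedNodes p v) (s.disjSum s))
    {j : ι} (hj : j ∈ s) {x : F} (hx : x = v j ∨ x = p⁻¹ * v j) :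
    (nodal (s.erase j) v * nodal (s.erase j) (p⁻¹ • v)).eval x ≠ 0 := by
  rw [eval_mul, eval_nodal, eval_nodal, ← prod_mul_distrib, prod_ne_zero_iff]
  intro i hi
  obtain ⟨hij, hi⟩ := mem_erase.1 hi
  obtain ⟨a, ha, rfl, hai, hai'⟩ : ∃ a ∈ s.disjSum s, pairedNodes p v a = x ∧
      a ≠ .inl i ∧ a ≠ .inr i := by
    rcases hx with rfl | rfl
    · exact ⟨.inl j, by simpa using hj, rfl, by simpa using hij.symm, by simp⟩
    · exact ⟨.inr j, by simpa using hj, rfl, by simp, by simpa using hij.symm⟩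
  exact mul_ne_zero
    (sub_ne_zero.2 fun h ↦ hai (hv ha (by simpa using hi) h))
    (sub_ne_zero.2 fun h ↦ hai' (hv ha (by simpa using hi) h))

theorem eventually_pairedNodes_ne_smul [TopologicalSpace F] [T1Space F] {κ : Type*} {t : Finset κ}
    {w : κ → F} (hp : p ≠ 0) (hw : Set.InjOn (pairedNodes p w) (t.disjSum t)) :
    ∀ᶠ r in 𝓝[≠] (1 : F), r ≠ 0 ∧ ∀ i ∈ s.disjSum s, ∀ k ∈ t.disjSum t,
      pairedNodes p v i ≠ pairedNodes p (r • w) k := by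
  refine nhdsNE_le_cofinite 1 ((eventually_cofinite_ne 0).and ?_)
  simp only [eventually_all_finset]
  intro i _ k hk
  filter_upwards [eventually_cofinite_ne (pairedNodes p v i / pairedNodes p w k)] with r hr h
  rw [pairedNodes_smul] at h
  exact hr ((div_eq_iff (pairedNodes_ne_zero hp hw hk)).2 h).symm

end PairedNodes

section DoubleResidue

variable {F ι κ : Type*} [Field F]
  {p : F} {s : Finset ι} {t : Finset κ} {A : ι → F} {B : κ → F} {P Q : F[X]}

/-- The residue of `f(x) = (∏ (x - p⁻¹ B l)) Q(x) / ∏ (x - A j)(x - p⁻¹ A j)` at the pole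
`pairedNodes p A i`. -/
noncomputable def leftResidue [DecidableEq ι] (p : F) (s : Finset ι) (t : Finset κ) (A : ι → F)
    (B : κ → F) (Q : F[X]) (i : ι ⊕ ι) : F :=
  nodalWeight (s.disjSum s) (pairedNodes p A) i *
    (nodal t (p⁻¹ • B) * Q).eval (pairedNodes p A i)

/-- The residue of `g(y) = P(y) (∏ (y - A j)) / ∏ (y - B l)(y - p⁻¹ B l)` at the pole
`pairedNodes p B k`. -/
noncomputable def rightResidue [DecidableEq κ] (p : F) (s : Finset ι) (t : Finset κ) (A : ι → F)
    (B : κ → F) (P : F[X]) (k : κ ⊕ κ) : F :=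
  nodalWeight (t.disjSum t) (pairedNodes p B) k *
    (P * nodal s A).eval (pairedNodes p B k)

/-- The kernel coupling the variables `x` and `y` of the double residue sum. -/
def coupling (p x y : F) : F := ((p * x - y) * (y - x))⁻¹

/-- The residue of `P Q / (X ∏ (X - p⁻¹ A j) ∏ (X - B l))`, which is `f g / X` in the notation of
`leftResidue` and `rightResidue`, at the node with index `i`. -/
noncomputable def diagonalResidue [DecidableEq ι] [DecidableEq κ] (p : F) (s : Finset ι)
    (t : Finset κ) (A : ι → F) (B : κ → F) (P Q : F[X]) (i : ι ⊕ κ) : F :=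
  nodalWeight (s.disjSum t) (Sum.elim (p⁻¹ • A) B) i *
    (P * Q).eval (Sum.elim (p⁻¹ • A) B i) / Sum.elim (p⁻¹ • A) B i

theorem sum_leftResidue_mul_coupling [DecidableEq ι] (hp : p ≠ 0)
    (hA : Set.InjOn (pairedNodes p A) (s.disjSum s))
    (hB : Set.InjOn (pairedNodes p B) (t.disjSum t))
    (hAB : ∀ i ∈ s.disjSum s, ∀ k ∈ t.disjSum t, pairedNodes p A i ≠ pairedNodes p B k)
    (hQ : Q.natDegree + #t ≤ #s + #s) {l : κ} (hl : l ∈ t) :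
    (p - 1) * ∑ i ∈ s.disjSum s,
        leftResidue p s t A B Q i * coupling p (pairedNodes p A i) (B l) =
      (nodal t (p⁻¹ • B) * Q).eval (B l) / (nodal (s.disjSum s) (pairedNodes p A)).eval (B l) /
        B l := by
  have hBl : B l ≠ 0 := ne_zero_of_injOn_pairedNodes hB hl
  have hp1 : p - 1 ≠ 0 := sub_ne_zero.2 (ne_one_of_injOn_pairedNodes hB hl)
  have hres := sum_nodalWeight_mul_eval_div_sub_mul_sub hA (P := nodal t (p⁻¹ • B) * Q)
    (z := p⁻¹ * B l) (z' := B l)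
    (by rw [card_disjSum]; exact natDegree_mul_le.trans (by rw [natDegree_nodal]; omega))
    (fun i hi ↦ hAB i hi (.inr l) (by simpa using hl))
    (fun i hi ↦ hAB i hi (.inl l) (by simpa using hl))
    (ne_inv_mul_of_injOn_pairedNodes hB hl hl).symm
  have hroot : (nodal t (p⁻¹ • B) * Q).eval (p⁻¹ * B l) = 0 := by
    rw [eval_mul, show p⁻¹ * B l = (p⁻¹ • B) l from rfl, eval_nodal_at_node hl, zero_mul]
  have hdiff : p⁻¹ * B l - B l = -((p - 1) * B l / p) := by field_simp; ring
  rw [hroot, zero_div, sub_zero, hdiff] at hres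
  calc _ = -((p - 1) / p * ∑ i ∈ s.disjSum s, nodalWeight (s.disjSum s) (pairedNodes p A) i *
        (nodal t (p⁻¹ • B) * Q).eval (pairedNodes p A i) /
          ((pairedNodes p A i - p⁻¹ * B l) * (pairedNodes p A i - B l))) := by
        rw [mul_sum, mul_sum, ← sum_neg_distrib]
        refine sum_congr rfl fun i _ ↦ ?_
        rw [leftResidue, coupling, show (p * pairedNodes p A i - B l) * (B l - pairedNodes p A i) =
          -(p * ((pairedNodes p A i - p⁻¹ * B l) * (pairedNodes p A i - B l))) by field_simp; ring,
          inv_neg, mul_inv]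
        ring
    _ = _ := by rw [hres]; field_simp

theorem sum_rightResidue_mul_coupling [DecidableEq κ] (hp : p ≠ 0)
    (hA : Set.InjOn (pairedNodes p A) (s.disjSum s))
    (hB : Set.InjOn (pairedNodes p B) (t.disjSum t))
    (hAB : ∀ i ∈ s.disjSum s, ∀ k ∈ t.disjSum t, pairedNodes p A i ≠ pairedNodes p B k)
    (hP : P.natDegree + #s ≤ #t + #t) {j : ι} (hj : j ∈ s) :
    (p - 1) * ∑ k ∈ t.disjSum t,
        rightResidue p s t A B P k * coupling p (p⁻¹ * A j) (pairedNodes p B k) =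
      -((P * nodal s A).eval (p⁻¹ * A j) /
        (nodal (t.disjSum t) (pairedNodes p B)).eval (p⁻¹ * A j) / (p⁻¹ * A j)) := by
  have hAj : A j ≠ 0 := ne_zero_of_injOn_pairedNodes hA hj
  have hp1 : p - 1 ≠ 0 := sub_ne_zero.2 (ne_one_of_injOn_pairedNodes hA hj)
  have hres := sum_nodalWeight_mul_eval_div_sub_mul_sub hB (P := P * nodal s A)
    (z := A j) (z' := p⁻¹ * A j)
    (by rw [card_disjSum]; exact natDegree_mul_le.trans (by rwa [natDegree_nodal]))
    (fun k hk ↦ (hAB (.inl j) (by simpa using hj) k hk).symm)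
    (fun k hk ↦ (hAB (.inr j) (by simpa using hj) k hk).symm)
    (ne_inv_mul_of_injOn_pairedNodes hA hj hj)
  have hroot : (P * nodal s A).eval (A j) = 0 := by rw [eval_mul, eval_nodal_at_node hj, mul_zero]
  have hdiff : A j - p⁻¹ * A j = (p - 1) * (p⁻¹ * A j) := by field_simp
  rw [hroot, zero_div, sub_zero, hdiff] at hres
  calc _ = -((p - 1) * ∑ k ∈ t.disjSum t, nodalWeight (t.disjSum t) (pairedNodes p B) k *
        (P * nodal s A).eval (pairedNodes p B k) /
          ((pairedNodes p B k - A j) * (pairedNodes p B k - p⁻¹ * A j))) := by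
        rw [mul_sum, mul_sum, ← sum_neg_distrib]
        refine sum_congr rfl fun k _ ↦ ?_
        rw [rightResidue, coupling, mul_inv_cancel_left₀ hp, ← neg_sub (pairedNodes p B k) (A j),
          neg_mul, inv_neg]
        ring
    _ = _ := by rw [hres]; field_simp

variable [DecidableEq ι] [DecidableEq κ]

theorem sum_leftResidue_mul_rightResidue_inl (hp : p ≠ 0)
    (hA : Set.InjOn (pairedNodes p A) (s.disjSum s))
    (hB : Set.InjOn (pairedNodes p B) (t.disjSum t))
    (hAB : ∀ i ∈ s.disjSum s, ∀ k ∈ t.disjSum t, pairedNodes p A i ≠ pairedNodes p B k)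
    (hQ : Q.natDegree + #t ≤ #s + #s) {l : κ} (hl : l ∈ t) :
    (p - 1) * ∑ i ∈ s.disjSum s, leftResidue p s t A B Q i * rightResidue p s t A B P (.inl l) *
        coupling p (pairedNodes p A i) (B l) =
      diagonalResidue p s t A B P Q (.inr l) := by
  have hβ : (nodal t (p⁻¹ • B)).eval (B l) ≠ 0 :=
    eval_nodal_not_at_node fun k hk ↦ ne_inv_mul_of_injOn_pairedNodes hB hl hk
  have hα : (nodal s A).eval (B l) ≠ 0 := eval_nodal_not_at_node fun i hi ↦
    (hAB (.inl i) (by simpa using hi) (.inl l) (by simpa using hl)).symm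
  simp_rw [mul_right_comm _ (rightResidue p s t A B P (.inl l)), ← sum_mul, ← mul_assoc,
    sum_leftResidue_mul_coupling hp hA hB hAB hQ hl]
  simp only [rightResidue, diagonalResidue, pairedNodes, nodalWeight_disjSum_inl,
    nodalWeight_disjSum_inr, nodal_disjSum, Sum.elim_inl, Sum.elim_inr, eval_mul]
  generalize p⁻¹ • B = B' at hβ ⊢
  field_simp

theorem sum_leftResidue_inr_mul_rightResidue (hp : p ≠ 0)
    (hA : Set.InjOn (pairedNodes p A) (s.disjSum s))
    (hB : Set.InjOn (pairedNodes p B) (t.disjSum t))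
    (hAB : ∀ i ∈ s.disjSum s, ∀ k ∈ t.disjSum t, pairedNodes p A i ≠ pairedNodes p B k)
    (hP : P.natDegree + #s ≤ #t + #t) {j : ι} (hj : j ∈ s) :
    (p - 1) * ∑ k ∈ t.disjSum t, leftResidue p s t A B Q (.inr j) * rightResidue p s t A B P k *
        coupling p (p⁻¹ * A j) (pairedNodes p B k) =
      -diagonalResidue p s t A B P Q (.inl j) := by
  have hα : (nodal s A).eval (p⁻¹ * A j) ≠ 0 :=
    eval_nodal_not_at_node fun i hi ↦ (ne_inv_mul_of_injOn_pairedNodes hA hi hj).symm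
  have hβ : (nodal t (p⁻¹ • B)).eval (p⁻¹ * A j) ≠ 0 := eval_nodal_not_at_node fun k hk ↦
    hAB (.inr j) (by simpa using hj) (.inr k) (by simpa using hk)
  simp_rw [mul_assoc (leftResidue p s t A B Q (.inr j)), ← mul_sum,
    mul_left_comm (p - 1), sum_rightResidue_mul_coupling hp hA hB hAB hP hj]
  simp only [leftResidue, diagonalResidue, pairedNodes, nodalWeight_disjSum_inl,
    nodalWeight_disjSum_inr, nodal_disjSum, Sum.elim_inl, Sum.elim_inr, eval_mul, Pi.smul_apply,
    smul_eq_mul]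
  generalize p⁻¹ • A = A', p⁻¹ • B = B', p⁻¹ * A j = x at hα hβ ⊢
  field_simp

theorem sum_diagonalResidue (hp : p ≠ 0)
    (hA : Set.InjOn (pairedNodes p A) (s.disjSum s))
    (hB : Set.InjOn (pairedNodes p B) (t.disjSum t))
    (hAB : ∀ i ∈ s.disjSum s, ∀ k ∈ t.disjSum t, pairedNodes p A i ≠ pairedNodes p B k)
    (hPQ : P.natDegree + Q.natDegree ≤ #s + #t) :
    ∑ i ∈ s.disjSum t, diagonalResidue p s t A B P Q i =
      (P * Q).coeff (#s + #t) -
        (P * Q).eval 0 / ((nodal s (p⁻¹ • A)).eval 0 * (nodal t B).eval 0) := by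
  have hinj : Set.InjOn (Sum.elim (p⁻¹ • A) B) (s.disjSum t) := by
    rintro (i | i) hi (k | k) hk h <;>
      simp only [mem_coe, inl_mem_disjSum, inr_mem_disjSum] at hi hk
    · exact congrArg Sum.inl (Sum.inr_injective (hA (by simpa using hi) (by simpa using hk) h))
    · exact absurd h (hAB (.inr i) (by simpa using hi) (.inl k) (by simpa using hk))
    · exact absurd h.symm (hAB (.inr k) (by simpa using hk) (.inl i) (by simpa using hi))
    · exact congrArg Sum.inr (injOn_of_injOn_pairedNodes hB hi hk h)
  have hne : ∀ i ∈ s.disjSum t, Sum.elim (p⁻¹ • A) B i ≠ 0 := by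
    rintro (i | i) hi <;> simp only [inl_mem_disjSum, inr_mem_disjSum] at hi
    · exact pairedNodes_ne_zero hp hA (i := .inr i) (by simpa using hi)
    · exact ne_zero_of_injOn_pairedNodes hB hi
  have hres := sum_nodalWeight_mul_eval_div_sub hinj (P := P * Q)
    (natDegree_mul_le.trans (by rwa [card_disjSum])) hne
  simp only [sub_zero, nodal_disjSum, card_disjSum, eval_mul (p := nodal s _)] at hres
  rw [← hres, add_sub_cancel_right]
  rfl

theorem sum_residues_sub_sum_residues (hp : p ≠ 0)
    (hA : Set.InjOn (pairedNodes p A) (s.disjSum s))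
    (hB : Set.InjOn (pairedNodes p B) (t.disjSum t))
    (hAB : ∀ i ∈ s.disjSum s, ∀ k ∈ t.disjSum t, pairedNodes p A i ≠ pairedNodes p B k)
    (hP : P.natDegree + #s ≤ #t + #t) (hQ : Q.natDegree + #t ≤ #s + #s) :
    (p - 1) * (∑ j ∈ s, ∑ l ∈ t, leftResidue p s t A B Q (.inl j) *
          rightResidue p s t A B P (.inl l) * coupling p (A j) (B l) -
        ∑ j ∈ s, ∑ l ∈ t, leftResidue p s t A B Q (.inr j) *
          rightResidue p s t A B P (.inr l) * coupling p (p⁻¹ * A j) (p⁻¹ * B l)) =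
      (P * Q).coeff (#s + #t) -
        (P * Q).eval 0 / ((nodal s (p⁻¹ • A)).eval 0 * (nodal t B).eval 0) := by
  have hcolumns := sum_congr (rfl : t = t) fun l hl ↦
    sum_leftResidue_mul_rightResidue_inl (P := P) hp hA hB hAB hQ hl
  have hrows := sum_congr (rfl : s = s) fun j hj ↦
    sum_leftResidue_inr_mul_rightResidue (Q := Q) hp hA hB hAB hP hj
  rw [← mul_sum] at hcolumns hrows
  simp only [sum_disjSum, sum_add_distrib, pairedNodes, Sum.elim_inl, Sum.elim_inr, Pi.smul_apply,
    smul_eq_mul, sum_neg_distrib] at hcolumns hrows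
  rw [sum_comm (s := t), sum_comm (s := t)] at hcolumns
  rw [← sum_diagonalResidue hp hA hB hAB (by omega), sum_disjSum]
  linear_combination hcolumns - hrows

/-- The summand of (A21) with node indices `j` and `l`, as a function of the values `x` and `y` of
the two nodes; the polynomials `P` and `Q` stand for `∏ (X - C i)` and `∏ (X - p⁻¹ D i)`. -/
noncomputable def nodeSummand (p : F) (s : Finset ι) (t : Finset κ) (A : ι → F) (B : κ → F)
    (P Q : F[X]) (j : ι) (l : κ) (x y : F) : F :=
  (nodal (t.erase l) (p⁻¹ • B) * Q).eval x * (P * nodal (s.erase j) A).eval y /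
    (x * y * (nodal (s.erase j) A * nodal (s.erase j) (p⁻¹ • A)).eval x *
      (nodal (t.erase l) B * nodal (t.erase l) (p⁻¹ • B)).eval y)

theorem mul_nodeSummand_eq_leftResidue_mul_rightResidue (hp : p ≠ 0)
    (hA : Set.InjOn (pairedNodes p A) (s.disjSum s))
    (hB : Set.InjOn (pairedNodes p B) (t.disjSum t))
    (hAB : ∀ i ∈ s.disjSum s, ∀ k ∈ t.disjSum t, pairedNodes p A i ≠ pairedNodes p B k)
    {j : ι} (hj : j ∈ s) {l : κ} (hl : l ∈ t) :
    p * nodeSummand p s t A B P Q j l (A j) (B l) =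
      (p - 1) ^ 2 * (leftResidue p s t A B Q (.inl j) * rightResidue p s t A B P (.inl l) *
        coupling p (A j) (B l)) := by
  have hp1 := sub_ne_zero.2 (ne_one_of_injOn_pairedNodes hA hj)
  have hAj := ne_zero_of_injOn_pairedNodes hA hj
  have hBl := ne_zero_of_injOn_pairedNodes hB hl
  have hne : B l - A j ≠ 0 := sub_ne_zero.2
    (hAB (.inl j) (by simpa using hj) (.inl l) (by simpa using hl)).symm
  have hne' : p * A j - B l ≠ 0 := fun h ↦
    hAB (.inl j) (by simpa using hj) (.inr l) (by simpa using hl) <| by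
      simp [pairedNodes, ← sub_eq_zero.1 h, hp]
  simp only [nodeSummand, leftResidue, rightResidue, coupling, pairedNodes, nodalWeight_disjSum_inl,
    Sum.elim_inl, eval_mul]
  simp only [nodalWeight_eq_eval_nodal_erase_inv,
    eval_nodal_eq_mul_eval_nodal_erase hj, eval_nodal_eq_mul_eval_nodal_erase hl, Pi.smul_apply,
    smul_eq_mul, show A j - p⁻¹ * A j = (p - 1) * A j / p by field_simp,
    show B l - p⁻¹ * B l = (p - 1) * B l / p by field_simp,
    show A j - p⁻¹ * B l = (p * A j - B l) / p by field_simp]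
  generalize p⁻¹ • A = A', p⁻¹ • B = B'
  field_simp

theorem nodeSummand_inv_mul_eq_leftResidue_mul_rightResidue (hp : p ≠ 0)
    (hA : Set.InjOn (pairedNodes p A) (s.disjSum s))
    (hB : Set.InjOn (pairedNodes p B) (t.disjSum t))
    (hAB : ∀ i ∈ s.disjSum s, ∀ k ∈ t.disjSum t, pairedNodes p A i ≠ pairedNodes p B k)
    {j : ι} (hj : j ∈ s) {l : κ} (hl : l ∈ t) :
    nodeSummand p s t A B P Q j l (p⁻¹ * A j) (p⁻¹ * B l) =
      (p - 1) ^ 2 * (leftResidue p s t A B Q (.inr j) * rightResidue p s t A B P (.inr l) *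
        coupling p (p⁻¹ * A j) (p⁻¹ * B l)) := by
  have hp1 := sub_ne_zero.2 (ne_one_of_injOn_pairedNodes hA hj)
  have hAj := ne_zero_of_injOn_pairedNodes hA hj
  have hBl := ne_zero_of_injOn_pairedNodes hB hl
  have hne : p⁻¹ * A j - p⁻¹ * B l ≠ 0 := sub_ne_zero.2
    (hAB (.inr j) (by simpa using hj) (.inr l) (by simpa using hl))
  have hne' : A j - p⁻¹ * B l ≠ 0 := sub_ne_zero.2
    (hAB (.inl j) (by simpa using hj) (.inr l) (by simpa using hl))
  simp only [nodeSummand, leftResidue, rightResidue, coupling, pairedNodes, nodalWeight_disjSum_inr,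
    Sum.elim_inr, eval_mul]
  simp only [nodalWeight_eq_eval_nodal_erase_inv,
    eval_nodal_eq_mul_eval_nodal_erase hj, eval_nodal_eq_mul_eval_nodal_erase hl, Pi.smul_apply,
    smul_eq_mul, mul_inv_cancel_left₀ hp, ← neg_sub (A j) (p⁻¹ * B l),
    ← neg_sub (p⁻¹ * A j) (p⁻¹ * B l),
    show p⁻¹ * A j - A j = -((p - 1) * (p⁻¹ * A j)) by field_simp; ring,
    show p⁻¹ * B l - B l = -((p - 1) * (p⁻¹ * B l)) by field_simp; ring]
  have hx : p⁻¹ * A j ≠ 0 := mul_ne_zero (inv_ne_zero hp) hAj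
  have hy : p⁻¹ * B l ≠ 0 := mul_ne_zero (inv_ne_zero hp) hBl
  generalize p⁻¹ • A = A', p⁻¹ • B = B', p⁻¹ * A j = x, p⁻¹ * B l = y at hne hne' hx hy ⊢
  field_simp

theorem sum_nodeSummand_sub_sum_nodeSummand_of_ne (hp : p ≠ 0)
    (hA : Set.InjOn (pairedNodes p A) (s.disjSum s))
    (hB : Set.InjOn (pairedNodes p B) (t.disjSum t))
    (hAB : ∀ i ∈ s.disjSum s, ∀ k ∈ t.disjSum t, pairedNodes p A i ≠ pairedNodes p B k)
    (hP : P.natDegree + #s ≤ #t + #t) (hQ : Q.natDegree + #t ≤ #s + #s) :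
    p * ∑ j ∈ s, ∑ l ∈ t, nodeSummand p s t A B P Q j l (A j) (B l) -
        ∑ j ∈ s, ∑ l ∈ t, nodeSummand p s t A B P Q j l (p⁻¹ * A j) (p⁻¹ * B l) =
      (p - 1) * ((P * Q).coeff (#s + #t) -
        (P * Q).eval 0 / ((nodal s (p⁻¹ • A)).eval 0 * (nodal t B).eval 0)) := by
  rw [← sum_residues_sub_sum_residues hp hA hB hAB hP hQ, ← mul_assoc, ← sq, mul_sub]
  simp only [mul_sum]
  congr 1 <;> refine sum_congr rfl fun j hj ↦ sum_congr rfl fun l hl ↦ ?_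
  · exact mul_nodeSummand_eq_leftResidue_mul_rightResidue hp hA hB hAB hj hl
  · exact nodeSummand_inv_mul_eq_leftResidue_mul_rightResidue hp hA hB hAB hj hl

section Deformation

variable [TopologicalSpace F] [IsTopologicalDivisionRing F]

theorem continuousAt_nodeSummand_smul {j : ι} {l : κ} {x y : F} (hx : x ≠ 0) (hy : y ≠ 0)
    (hxA : (nodal (s.erase j) A * nodal (s.erase j) (p⁻¹ • A)).eval x ≠ 0)
    (hyB : (nodal (t.erase l) B * nodal (t.erase l) (p⁻¹ • B)).eval y ≠ 0) :
    ContinuousAt (fun r : F ↦ nodeSummand p s t A (r • B) P Q j l x (r * y)) 1 := by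
  have hcont := fun (C : κ → F) (z : F → F) (hz : Continuous z) ↦
    continuous_eval_nodal_smul (t.erase l) C hz
  simp only [nodeSummand, smul_comm p⁻¹, eval_mul]
  refine ContinuousAt.div (Continuous.continuousAt ?_) (Continuous.continuousAt ?_) ?_
  · have := hcont (p⁻¹ • B) _ (continuous_const (y := x))
    fun_prop
  · have := hcont B _ (continuous_mul_const y)
    have := hcont (p⁻¹ • B) _ (continuous_mul_const y)
    fun_prop
  · simpa only [one_mul, one_smul, eval_mul] using
      mul_ne_zero (mul_ne_zero (mul_ne_zero hx hy) hxA) hyB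

theorem sum_nodeSummand_sub_sum_nodeSummand_of_topological [T2Space F] [(𝓝[≠] (1 : F)).NeBot]
    (hp : p ≠ 0) (hA : Set.InjOn (pairedNodes p A) (s.disjSum s))
    (hB : Set.InjOn (pairedNodes p B) (t.disjSum t))
    (hP : P.natDegree + #s ≤ #t + #t) (hQ : Q.natDegree + #t ≤ #s + #s) :
    p * ∑ j ∈ s, ∑ l ∈ t, nodeSummand p s t A B P Q j l (A j) (B l) -
        ∑ j ∈ s, ∑ l ∈ t, nodeSummand p s t A B P Q j l (p⁻¹ * A j) (p⁻¹ * B l) =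
      (p - 1) * ((P * Q).coeff (#s + #t) -
        (P * Q).eval 0 / ((nodal s (p⁻¹ • A)).eval 0 * (nodal t B).eval 0)) := by
  have hA₀ := fun j (hj : j ∈ s) ↦ ne_zero_of_injOn_pairedNodes hA hj
  have hB₀ := fun l (hl : l ∈ t) ↦ ne_zero_of_injOn_pairedNodes hB hl
  have hleft : ContinuousAt (fun r : F ↦
      p * ∑ j ∈ s, ∑ l ∈ t, nodeSummand p s t A (r • B) P Q j l (A j) (r * B l) -
        ∑ j ∈ s, ∑ l ∈ t, nodeSummand p s t A (r • B) P Q j l (p⁻¹ * A j) (r * (p⁻¹ * B l))) 1 := by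
    refine .sub (.const_mul ?_ _) ?_ <;>
      refine tendsto_finsetSum _ fun j hj ↦ tendsto_finsetSum _ fun l hl ↦ ?_
    · exact continuousAt_nodeSummand_smul (hA₀ j hj) (hB₀ l hl)
        (eval_nodal_erase_mul_nodal_erase_ne_zero hA hj (.inl rfl))
        (eval_nodal_erase_mul_nodal_erase_ne_zero hB hl (.inl rfl))
    · exact continuousAt_nodeSummand_smul (mul_ne_zero (inv_ne_zero hp) (hA₀ j hj))
        (mul_ne_zero (inv_ne_zero hp) (hB₀ l hl))
        (eval_nodal_erase_mul_nodal_erase_ne_zero hA hj (.inr rfl))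
        (eval_nodal_erase_mul_nodal_erase_ne_zero hB hl (.inr rfl))
  have hright : ContinuousAt (fun r : F ↦ (p - 1) * ((P * Q).coeff (#s + #t) -
      (P * Q).eval 0 / ((nodal s (p⁻¹ • A)).eval 0 * (nodal t (r • B)).eval 0))) 1 := by
    refine .const_mul (.sub continuousAt_const (.div continuousAt_const
      (.const_mul (continuous_eval_nodal_smul t B continuous_const).continuousAt _) ?_)) _
    rw [one_smul]
    exact mul_ne_zero
      (eval_nodal_not_at_node fun j hj ↦ (mul_ne_zero (inv_ne_zero hp) (hA₀ j hj)).symm)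
      (eval_nodal_not_at_node fun l hl ↦ (hB₀ l hl).symm)
  have heq := (hleft.eventuallyEq_nhds_iff_eventuallyEq_nhdsNE hright).1 <| by
    filter_upwards [eventually_pairedNodes_ne_smul (s := s) (v := A) hp hB] with r ⟨hr, hne⟩
    have hrB : Set.InjOn (pairedNodes p (r • B)) (t.disjSum t) := by
      rw [pairedNodes_smul]
      exact fun k hk k' hk' h ↦ hB hk hk' (mul_left_cancel₀ hr h)
    simpa only [Pi.smul_apply, smul_eq_mul, mul_left_comm p⁻¹] using
      sum_nodeSummand_sub_sum_nodeSummand_of_ne hp hA hrB hne hP hQ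
  simpa only [one_smul, one_mul] using heq.eq_of_nhds

end Deformation

theorem nodeSummand_map {K : Type*} [Field K] (φ : F →+* K) (j : ι) (l : κ) (x y : F) :
    nodeSummand (φ p) s t (φ ∘ A) (φ ∘ B) (P.map φ) (Q.map φ) j l (φ x) (φ y) =
      φ (nodeSummand p s t A B P Q j l x y) := by
  simp only [nodeSummand, eval_mul, eval_map_apply, eval_nodal_map, ← map_inv₀,
    eval_nodal_smul_map, map_div₀, map_mul]

theorem sum_nodeSummand_sub_sum_nodeSummand
    (hp : p ≠ 0) (hA : Set.InjOn (pairedNodes p A) (s.disjSum s))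
    (hB : Set.InjOn (pairedNodes p B) (t.disjSum t))
    (hP : P.natDegree + #s ≤ #t + #t) (hQ : Q.natDegree + #t ≤ #s + #s) :
    p * ∑ j ∈ s, ∑ l ∈ t, nodeSummand p s t A B P Q j l (A j) (B l) -
        ∑ j ∈ s, ∑ l ∈ t, nodeSummand p s t A B P Q j l (p⁻¹ * A j) (p⁻¹ * B l) =
      (p - 1) * ((P * Q).coeff (#s + #t) -
        (P * Q).eval 0 / ((nodal s (p⁻¹ • A)).eval 0 * (nodal t B).eval 0)) := by
  have := neBot_nhdsNE_one_laurentSeries F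
  let φ := algebraMap F F⸨X⸩
  have h := sum_nodeSummand_sub_sum_nodeSummand_of_topological (p := φ p) (A := φ ∘ A) (B := φ ∘ B)
    (P := P.map φ) (Q := Q.map φ) ((map_ne_zero φ).2 hp)
    (by rw [pairedNodes_map]; exact φ.injective.comp_injOn hA)
    (by rw [pairedNodes_map]; exact φ.injective.comp_injOn hB)
    (by rwa [natDegree_map]) (by rwa [natDegree_map])
  refine φ.injective ?_
  simpa only [Function.comp_apply, ← map_inv₀, ← map_mul, nodeSummand_map, ← map_sum, ← map_sub,
    ← Polynomial.map_mul, coeff_map, ← map_zero φ, eval_map_apply, eval_nodal_map,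
    eval_nodal_smul_map, ← map_div₀, ← map_one φ] using h

theorem nodeSummand_nodal {μ ν : Type*} (u : Finset μ) (w : Finset ν) (C : μ → F) (D : ν → F)
    (j : ι) (l : κ) (x y : F) :
    nodeSummand p s t A B (nodal u C) (nodal w (p⁻¹ • D)) j l x y =
      ((∏ i ∈ t.erase l, (x - p⁻¹ * B i)) * (∏ i ∈ w, (x - p⁻¹ * D i)) *
          (∏ i ∈ u, (y - C i)) * ∏ i ∈ s.erase j, (y - A i)) /
        (x * y * (∏ i ∈ s.erase j, (x - A i) * (x - p⁻¹ * A i)) *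
          ∏ i ∈ t.erase l, (y - B i) * (y - p⁻¹ * B i)) := by
  simp only [nodeSummand, eval_mul, eval_nodal, Pi.smul_apply, smul_eq_mul, prod_mul_distrib]
  ring

theorem nodeSummand_nodal_inv_mul {μ ν : Type*} (hp : p ≠ 0) {u : Finset μ} {w : Finset ν}
    (hs : #s = #w + 1) (ht : #t = #w + 2) (hu : #u = #w + 3) (C : μ → F) (D : ν → F)
    {j : ι} (hj : j ∈ s) {l : κ} (hl : l ∈ t) (x y : F) :
    nodeSummand p s t A B (nodal u C) (nodal w (p⁻¹ • D)) j l (p⁻¹ * x) (p⁻¹ * y) =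
      ((∏ i ∈ t.erase l, (x - B i)) * (∏ i ∈ w, (x - D i)) *
          (∏ i ∈ u, (y - p * C i)) * ∏ i ∈ s.erase j, (y - p * A i)) /
        (x * y * (∏ i ∈ s.erase j, (x - A i) * (x - p * A i)) *
          ∏ i ∈ t.erase l, (y - B i) * (y - p * B i)) := by
  have hsj : #(s.erase j) = #w := by rw [card_erase_of_mem hj, hs, Nat.add_sub_cancel]
  have htl : #(t.erase l) = #w + 1 := by rw [card_erase_of_mem hl, ht]; rfl
  simp only [nodeSummand, eval_mul, eval_inv_mul_nodal hp, smul_inv_smul₀ hp, hsj, htl, hu]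
  simp only [eval_nodal, Pi.smul_apply, smul_eq_mul, prod_mul_distrib]
  generalize #w = n
  rw [← mul_div_mul_left _ (x * y * _ * _) (pow_ne_zero (4 * n + 4) (inv_ne_zero hp))]
  congr 1 <;> ring

end DoubleResidue

theorem identity_A21_general {F ι κ μ ν : Type*} [Field F] [DecidableEq ι] [DecidableEq κ]
    {q : F} (hq : q ≠ 0) {s : Finset ι} {t : Finset κ} {u : Finset μ} {w : Finset ν}
    (hs : #s = #w + 1) (ht : #t = #w + 2) (hu : #u = #w + 3)
    {A : ι → F} {B : κ → F} (C : μ → F) (D : ν → F)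
    (hA : Set.InjOn (pairedNodes (q ^ 2) A) (s.disjSum s))
    (hB : Set.InjOn (pairedNodes (q ^ 2) B) (t.disjSum t)) :
    (∑ j ∈ s, ∑ l ∈ t,
      q * ((∏ i ∈ t.erase l, (A j - (q ^ 2)⁻¹ * B i)) *
            (∏ i ∈ w, (A j - (q ^ 2)⁻¹ * D i)) *
            (∏ i ∈ u, (B l - C i)) *
            ∏ i ∈ s.erase j, (B l - A i)) /
          (A j * B l *
            (∏ i ∈ s.erase j, (A j - A i) * (A j - (q ^ 2)⁻¹ * A i)) *
            ∏ i ∈ t.erase l, (B l - B i) * (B l - (q ^ 2)⁻¹ * B i)))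
    - (∑ j ∈ s, ∑ l ∈ t,
      q⁻¹ * ((∏ i ∈ t.erase l, (A j - B i)) *
            (∏ i ∈ w, (A j - D i)) *
            (∏ i ∈ u, (B l - q ^ 2 * C i)) *
            ∏ i ∈ s.erase j, (B l - q ^ 2 * A i)) /
          (A j * B l *
            (∏ i ∈ s.erase j, (A j - A i) * (A j - q ^ 2 * A i)) *
            ∏ i ∈ t.erase l, (B l - B i) * (B l - q ^ 2 * B i)))
    - (q - q⁻¹) * (1 - q ^ 2 * ((∏ i ∈ w, D i) * ∏ i ∈ u, C i) /
        ((∏ i ∈ s, A i) * ∏ i ∈ t, B i)) = 0 := by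
  have hp : q ^ 2 ≠ 0 := pow_ne_zero 2 hq
  have hcoeff : (nodal u C * nodal w ((q ^ 2)⁻¹ • D)).coeff (#s + #t) = 1 := by
    have hdeg : #s + #t = (nodal u C * nodal w ((q ^ 2)⁻¹ • D)).natDegree := by
      rw [Monic.natDegree_mul nodal_monic nodal_monic, natDegree_nodal, natDegree_nodal]
      omega
    rw [hdeg]
    exact Monic.mul nodal_monic nodal_monic
  have hmain := sum_nodeSummand_sub_sum_nodeSummand hp hA hB
    (P := nodal u C) (Q := nodal w ((q ^ 2)⁻¹ • D))
    (by rw [natDegree_nodal]; omega) (by rw [natDegree_nodal]; omega)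
  rw [hcoeff, eval_zero_nodal_mul_nodal_div hp hs ht hu A B C D] at hmain
  simp only [mul_div_assoc q, mul_div_assoc q⁻¹, ← mul_sum, ← nodeSummand_nodal]
  rw [sum_congr rfl fun j hj ↦ sum_congr rfl fun l hl ↦
    (nodeSummand_nodal_inv_mul (A := A) (B := B) hp hs ht hu C D hj hl (A j) (B l)).symm]
  have hscale : ∀ S S' E : F, q ^ 2 * S - S' = (q ^ 2 - 1) * (1 - E) →
      q * S - q⁻¹ * S' - (q - q⁻¹) * (1 - E) = 0 := fun S S' E h ↦ by
    field_simp
    linear_combination h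
  exact hscale _ _ _ hmain

/-- Identity (A21). -/
theorem identity_A21 (q : ℂ) (hq : q ≠ 0) (hq2 : q ^ 2 ≠ 1) (n : ℕ) (hn : 2 ≤ n)
    (A B C D : ℕ → ℂ)
    (hA0 : ∀ i ∈ Finset.Icc 1 (n - 1), A i ≠ 0)
    (hB0 : ∀ i ∈ Finset.Icc 1 n, B i ≠ 0)
    (hAA : ∀ j ∈ Finset.Icc 1 (n - 1), ∀ i ∈ Finset.Icc 1 (n - 1), j ≠ i →
      A j ≠ A i ∧ A j ≠ q ^ 2 * A i ∧ A j ≠ (q ^ 2)⁻¹ * A i)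
    (hBB : ∀ l ∈ Finset.Icc 1 n, ∀ i ∈ Finset.Icc 1 n, l ≠ i →
      B l ≠ B i ∧ B l ≠ q ^ 2 * B i ∧ B l ≠ (q ^ 2)⁻¹ * B i) :
    (∑ j ∈ Finset.Icc 1 (n - 1), ∑ l ∈ Finset.Icc 1 n,
      q * ((∏ i ∈ (Finset.Icc 1 n).erase l, (A j - (q ^ 2)⁻¹ * B i)) *
            (∏ i ∈ Finset.Icc 1 (n - 2), (A j - (q ^ 2)⁻¹ * D i)) *
            (∏ i ∈ Finset.Icc 1 (n + 1), (B l - C i)) *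
            ∏ i ∈ (Finset.Icc 1 (n - 1)).erase j, (B l - A i)) /
          (A j * B l *
            (∏ i ∈ (Finset.Icc 1 (n - 1)).erase j, (A j - A i) * (A j - (q ^ 2)⁻¹ * A i)) *
            ∏ i ∈ (Finset.Icc 1 n).erase l, (B l - B i) * (B l - (q ^ 2)⁻¹ * B i)))
    - (∑ j ∈ Finset.Icc 1 (n - 1), ∑ l ∈ Finset.Icc 1 n,
      q⁻¹ * ((∏ i ∈ (Finset.Icc 1 n).erase l, (A j - B i)) *
            (∏ i ∈ Finset.Icc 1 (n - 2), (A j - D i)) *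
            (∏ i ∈ Finset.Icc 1 (n + 1), (B l - q ^ 2 * C i)) *
            ∏ i ∈ (Finset.Icc 1 (n - 1)).erase j, (B l - q ^ 2 * A i)) /
          (A j * B l *
            (∏ i ∈ (Finset.Icc 1 (n - 1)).erase j, (A j - A i) * (A j - q ^ 2 * A i)) *
            ∏ i ∈ (Finset.Icc 1 n).erase l, (B l - B i) * (B l - q ^ 2 * B i)))
    - (q - q⁻¹) * (1 - q ^ 2 *
        ((∏ i ∈ Finset.Icc 1 (n - 2), D i) * ∏ i ∈ Finset.Icc 1 (n + 1), C i) /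
        ((∏ i ∈ Finset.Icc 1 (n - 1), A i) * ∏ i ∈ Finset.Icc 1 n, B i)) = 0 := by
  have hp : q ^ 2 ≠ 0 := pow_ne_zero 2 hq
  exact identity_A21_general hq (by simp; omega) (by simp; omega) (by simp; omega) C D
    (injOn_pairedNodes hq2 hA0 (fun j hj i hi h ↦ ⟨(hAA j hj i hi h).1, (hAA j hj i hi h).2.2⟩) hp)
    (injOn_pairedNodes hq2 hB0 (fun l hl i hi h ↦ ⟨(hBB l hl i hi h).1, (hBB l hl i hi h).2.2⟩) hp)
end
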